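/- Let a > 0 with a ≠ 1, let n ≥ 2 be an integer, and let s ∈ ℝ. Assume there exists a constant C > 0, independent of f, such that for every radial function f ∈ C_c^∞(ℝⁿ \ {0}) one has ‖S^a f‖_{L²(ℝⁿ, L^∞(B))} ≤ C ‖f‖_{H^s(ℝⁿ)}. Then s ≥ a/4. -/

import Mathlib

open MeasureTheory Real
open scoped InnerProductSpace

noncomputable section

/-- The Fourier transform `f̂(ξ) = ∫ e^{-i x·ξ} f(x) dx` on `ℝⁿ`. -/
def FT (n : ℕ) (f : EuclideanSpace ℝ (Fin n) → ℂ) (ξ : EuclideanSpace ℝ (Fin n)) : ℂ :=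
  ∫ x, Complex.exp (-(Complex.I * ((⟪x, ξ⟫_ℝ : ℝ) : ℂ))) * f x

/-- The oscillatory integral `S^a f(x,t) = (2π)^{-n} ∫ e^{i(x·ξ + t|ξ|^a)} f̂(ξ) dξ`. -/
def Sosc (n : ℕ) (a : ℝ) (f : EuclideanSpace ℝ (Fin n) → ℂ)
    (x : EuclideanSpace ℝ (Fin n)) (t : ℝ) : ℂ :=
  (((2 * π) ^ n : ℝ) : ℂ)⁻¹ *
    ∫ ξ, Complex.exp (Complex.I * ((⟪x, ξ⟫_ℝ + t * ‖ξ‖ ^ a : ℝ) : ℂ)) * FT n f ξ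

/-!
A wave packet of width `A` and unit frequency keeps its shape for times up to `A ^ 2`. Let the
packet be radial, concentrated near the sphere of radius `R`. As `R → ∞`, the frequency-localised
solution, observed on the ray through a unit vector `e` at `(R + y) e` and at the time `-2πy / a`
that the group velocity prescribes, converges to a quantity within `O((|y| + 1) / A ^ 2)` of modulus
one: along the ray only the second-order Taylor error of the phase survives. So its maximal function
over times of size `A ^ 2` is bounded below on a shell of thickness `A ^ 2`, while the packet itself
lives on a shell of thickness `A`; comparing `L²` norms squared, the constant of a maximal estimate
over such times is at least of the order of `A`. By dilation, the maximal estimate over unit times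
with `s ≥ 0` derivatives gives one over times of size `l ^ a`, at the cost of a factor
`l ^ (2 * s)`. Taking `A ^ 2 = l ^ a` and `l → ∞` yields `a / 2 ≤ 2 * s`.
-/

open Filter Topology
open scoped FourierTransform SchwartzMap ContDiff ENNReal LineDeriv

section Plancherel

variable {E F : Type*} [NormedAddCommGroup E] [InnerProductSpace ℝ E] [FiniteDimensional ℝ E]
  [MeasurableSpace E] [BorelSpace E] [NormedAddCommGroup F] [InnerProductSpace ℂ F]
  {f : E → F}

theorem continuous_fourier (h1 : Integrable f) : Continuous (𝓕 f) :=
  VectorFourier.fourierIntegral_continuous Real.continuous_fourierChar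
    (by exact continuous_inner) h1

variable [CompleteSpace F]

theorem integral_fourier_smul_eq {φ : E → ℂ} (hφ : Integrable φ) (h1 : Integrable f) :
    ∫ x, 𝓕 φ x • f x = ∫ x, φ x • 𝓕 f x := by
  have h := VectorFourier.integral_fourierIntegral_smul_eq_flip (L := innerₗ E)
    (μ := volume) (ν := volume) Real.continuous_fourierChar (by exact continuous_inner) hφ h1
  simpa only [flip_innerₗ] using! h

theorem fourier_ae_eq_Lp_fourier (h1 : Integrable f) (h2 : MemLp f 2) :
    𝓕 f =ᵐ[volume] (𝓕 h2.toLp : Lp F 2 (volume : Measure E)) := by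
  refine ae_eq_of_integral_contDiff_smul_eq (continuous_fourier h1).locallyIntegrable
    ((Lp.memLp _).locallyIntegrable one_le_two) fun g hg hgc => ?_
  have hφc : HasCompactSupport (Complex.ofRealCLM ∘ g) := hgc.comp_left rfl
  have hφ : ContDiff ℝ ∞ (Complex.ofRealCLM ∘ g) := by fun_prop
  set φ : 𝓢(E, ℂ) := hφc.toSchwartzMap hφ
  have hφg (x : E) (c : F) : φ x • c = g x • c := Complex.coe_smul (g x) c
  have duality := DFunLike.congr_fun (Lp.fourier_toTemperedDistribution_eq h2.toLp) φ
  simp only [TemperedDistribution.fourier_apply, Lp.toTemperedDistribution_apply] at duality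
  calc ∫ x, g x • 𝓕 f x = ∫ x, φ x • 𝓕 f x := by simp only [hφg]
    _ = ∫ x, 𝓕 φ x • f x := (integral_fourier_smul_eq φ.integrable h1).symm
    _ = ∫ x, 𝓕 φ x • h2.toLp f x :=
        integral_congr_ae (h2.coeFn_toLp.mono fun x hx => by simp only [hx])
    _ = ∫ x, φ x • (𝓕 h2.toLp : Lp F 2 (volume : Measure E)) x := duality
    _ = ∫ x, g x • (𝓕 h2.toLp : Lp F 2 (volume : Measure E)) x := by simp only [hφg]

theorem eLpNorm_fourier (h1 : Integrable f) (h2 : MemLp f 2) :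
    eLpNorm (𝓕 f) 2 = eLpNorm f 2 := by
  rw [eLpNorm_congr_ae (fourier_ae_eq_Lp_fourier h1 h2), ← eLpNorm_congr_ae h2.coeFn_toLp,
    ← Lp.enorm_def, ← Lp.enorm_def, ← ofReal_norm, Lp.norm_fourier_eq, ofReal_norm]

theorem eLpNorm_two_sq {α G : Type*} [MeasurableSpace α] [NormedAddCommGroup G] (μ : Measure α)
    (g : α → G) : eLpNorm g 2 μ ^ 2 = ∫⁻ x, ‖g x‖ₑ ^ 2 ∂μ := by
  simpa using eLpNorm_nnreal_pow_eq_lintegral (p := 2) (f := g) (μ := μ) two_ne_zero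

theorem lintegral_enorm_fourier_sq (h1 : Integrable f) (h2 : MemLp f 2) :
    ∫⁻ x, ‖𝓕 f x‖ₑ ^ 2 = ∫⁻ x, ‖f x‖ₑ ^ 2 := by
  rw [← eLpNorm_two_sq, ← eLpNorm_two_sq, eLpNorm_fourier h1 h2]

theorem lintegral_enorm_fourierInv_sq (h1 : Integrable f) (h2 : MemLp f 2) :
    ∫⁻ x, ‖𝓕⁻ f x‖ₑ ^ 2 = ∫⁻ x, ‖f x‖ₑ ^ 2 := by
  simp only [Real.fourierInv_eq_fourier_neg]
  rw [lintegral_neg_eq_self fun x => ‖𝓕 f x‖ₑ ^ 2, lintegral_enorm_fourier_sq h1 h2]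

end Plancherel

section Propagator

variable {E : Type*} [NormedAddCommGroup E]

/-- The multiplier `e^{iτ|η|^a}` of the evolution. -/
def phaseFactor (a τ : ℝ) (η : E) : ℂ := Complex.exp ((τ * ‖η‖ ^ a : ℝ) * Complex.I)

/-- The Fourier multiplier `i|η|^a` generating the evolution, applied to `F`. -/
def generator (a : ℝ) (F : E → ℂ) (η : E) : ℂ := Complex.I * ((‖η‖ ^ a : ℝ) : ℂ) * F η

theorem norm_phaseFactor (a τ : ℝ) (η : E) : ‖phaseFactor a τ η‖ = 1 :=
  Complex.norm_exp_ofReal_mul_I _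

theorem enorm_phaseFactor_mul (a τ : ℝ) (η : E) (c : ℂ) : ‖phaseFactor a τ η * c‖ₑ = ‖c‖ₑ := by
  rw [enorm_mul, ← ofReal_norm (phaseFactor a τ η), norm_phaseFactor, ENNReal.ofReal_one, one_mul]

theorem norm_exp_mul_phaseFactor_mul (a r τ : ℝ) (η : E) (c : ℂ) :
    ‖Complex.exp (r * Complex.I) * (phaseFactor a τ η * c)‖ = ‖c‖ := by
  rw [norm_mul, norm_mul, norm_phaseFactor, Complex.norm_exp_ofReal_mul_I, one_mul, one_mul]

theorem continuous_phaseFactor {a : ℝ} (ha : 0 ≤ a) :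
    Continuous fun p : ℝ × E => phaseFactor a p.1 p.2 := by
  have : Continuous fun p : ℝ × E => ‖p.2‖ ^ a :=
    continuous_snd.norm.rpow_const fun _ => Or.inr ha
  unfold phaseFactor
  fun_prop

theorem hasDerivAt_phaseFactor (a τ : ℝ) (η : E) :
    HasDerivAt (fun r => phaseFactor a r η)
      (phaseFactor a τ η * (Complex.I * ((‖η‖ ^ a : ℝ) : ℂ))) τ := by
  have h := ((hasDerivAt_id τ).mul_const (‖η‖ ^ a)).ofReal_comp.mul_const Complex.I
  rw [one_mul, mul_comm _ Complex.I] at h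
  exact h.cexp

theorem norm_generator_le {a : ℝ} (ha : 0 ≤ a) (F : E → ℂ) (η : E) :
    ‖generator a F η‖ ≤ ‖((1 + ‖η‖ ^ 2) ^ (a / 2) : ℝ) • F η‖ := by
  have hpow : ‖η‖ ^ a ≤ (1 + ‖η‖ ^ 2) ^ (a / 2) := by
    calc ‖η‖ ^ a = (‖η‖ ^ 2) ^ (a / 2) := by
          rw [← Real.rpow_natCast_mul (norm_nonneg η)]
          congr 1
          push_cast
          ring
      _ ≤ (1 + ‖η‖ ^ 2) ^ (a / 2) := by gcongr; linarith
  rw [generator, norm_mul, norm_mul, Complex.norm_I, one_mul, Complex.norm_real, norm_smul,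
    Real.norm_of_nonneg (by positivity), Real.norm_of_nonneg (by positivity)]
  gcongr

variable [InnerProductSpace ℝ E] [FiniteDimensional ℝ E] [MeasurableSpace E] [BorelSpace E]

/-- The evolution at time `τ` and position `x` of the datum with Fourier transform `F`: the inverse
Fourier transform, normalised by `e^{2πi⟨x,η⟩}`, of `e^{iτ|η|^a} F(η)`. -/
def propagate (a : ℝ) (F : E → ℂ) (x : E) (τ : ℝ) : ℂ :=
  𝓕⁻ (fun η => phaseFactor a τ η * F η) x

/-- The maximal function of the evolution over the times `|τ| < T`. -/
def propagateMax (a T : ℝ) (F : E → ℂ) (x : E) : ℝ≥0∞ :=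
  ⨆ τ : Set.Ioo (-T) T, ‖propagate a F x τ‖ₑ

theorem propagate_eq_integral (a : ℝ) (F : E → ℂ) (x : E) (τ : ℝ) :
    propagate a F x τ
      = ∫ η, Complex.exp ((2 * π * ⟪η, x⟫_ℝ : ℝ) * Complex.I) * (phaseFactor a τ η * F η) := by
  rw [propagate, Real.fourierInv_eq']
  rfl

theorem integrable_phaseFactor_mul {a : ℝ} (ha : 0 ≤ a) {F : E → ℂ} (hF : Integrable F) (τ : ℝ) :
    Integrable fun η => phaseFactor a τ η * F η :=
  hF.bdd_mul ((continuous_phaseFactor ha).comp (Continuous.prodMk_right τ)).aestronglyMeasurable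
    (ae_of_all _ fun η => (norm_phaseFactor a τ η).le)

theorem integrable_exp_mul_phaseFactor_mul {a : ℝ} (ha : 0 ≤ a) {F : E → ℂ} (hF : Integrable F)
    (x : E) (τ : ℝ) :
    Integrable fun η =>
      Complex.exp ((2 * π * ⟪η, x⟫_ℝ : ℝ) * Complex.I) * (phaseFactor a τ η * F η) :=
  (integrable_phaseFactor_mul ha hF τ).bdd_mul
    (by fun_prop : Continuous fun η : E =>
      Complex.exp ((2 * π * ⟪η, x⟫_ℝ : ℝ) * Complex.I)).aestronglyMeasurable
    (ae_of_all _ fun η => (Complex.norm_exp_ofReal_mul_I _).le)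

theorem continuous_propagate {a : ℝ} (ha : 0 ≤ a) {F : E → ℂ} (hF : Integrable F) :
    Continuous (Function.uncurry (propagate a F)) := by
  simp only [Function.uncurry_def, propagate_eq_integral]
  refine continuous_of_dominated
    (fun p => (integrable_exp_mul_phaseFactor_mul ha hF p.1 p.2).aestronglyMeasurable)
    (fun p => ae_of_all _ fun η => (norm_exp_mul_phaseFactor_mul a _ p.2 η (F η)).le) hF.norm
    (ae_of_all _ fun η => ?_)
  have hphase := (continuous_phaseFactor (E := E) ha).comp
    (by fun_prop : Continuous fun p : E × ℝ => (p.2, η))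
  exact Continuous.mul (by fun_prop) (hphase.mul continuous_const)

theorem lintegral_enorm_propagate_sq {a : ℝ} (ha : 0 ≤ a) {F : E → ℂ} (h1 : Integrable F)
    (h2 : MemLp F 2) (τ : ℝ) :
    ∫⁻ x, ‖propagate a F x τ‖ₑ ^ 2 = ∫⁻ η, ‖F η‖ₑ ^ 2 := by
  have hint := integrable_phaseFactor_mul ha h1 τ
  have hmem : MemLp (fun η => phaseFactor a τ η * F η) 2 :=
    h2.of_le hint.aestronglyMeasurable
      (ae_of_all _ fun η => by rw [norm_mul, norm_phaseFactor, one_mul])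
  simpa only [enorm_phaseFactor_mul] using! lintegral_enorm_fourierInv_sq hint hmem

theorem hasDerivAt_propagate {a : ℝ} (ha : 0 ≤ a) {F : E → ℂ} (h1 : Integrable F)
    (h1' : Integrable (generator a F)) (x : E) (τ : ℝ) :
    HasDerivAt (propagate a F x) (propagate a (generator a F) x τ) τ := by
  rw [funext (propagate_eq_integral a F x), propagate_eq_integral]
  refine (hasDerivAt_integral_of_dominated_loc_of_deriv_le (s := Set.univ)
    (bound := fun η => ‖generator a F η‖) Filter.univ_mem
    (.of_forall fun r => (integrable_exp_mul_phaseFactor_mul ha h1 x r).aestronglyMeasurable)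
    (integrable_exp_mul_phaseFactor_mul ha h1 x τ)
    (integrable_exp_mul_phaseFactor_mul ha h1' x τ).aestronglyMeasurable
    (ae_of_all _ fun η r _ => (norm_exp_mul_phaseFactor_mul a _ r η _).le) h1'.norm
    (ae_of_all _ fun η r _ => ?_)).2
  refine (((hasDerivAt_phaseFactor a r η).mul_const (F η)).const_mul _).congr_deriv ?_
  rw [generator, mul_assoc (phaseFactor a r η)]

theorem measurable_propagateMax {a : ℝ} (ha : 0 ≤ a) {F : E → ℂ} (hF : Integrable F) (T : ℝ) :
    Measurable (propagateMax a T F) :=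
  (lowerSemicontinuous_iSup fun τ : Set.Ioo (-T) T => ((continuous_propagate ha hF).uncurry_right
    τ.1).enorm.lowerSemicontinuous).measurable

theorem enorm_propagate_le_propagateMax {a T τ : ℝ} (hτ : τ ∈ Set.Ioo (-T) T) (F : E → ℂ)
    (x : E) : ‖propagate a F x τ‖ₑ ≤ propagateMax a T F x :=
  le_iSup (fun τ : Set.Ioo (-T) T => ‖propagate a F x τ‖ₑ) ⟨τ, hτ⟩

theorem propagateMax_mul {c : ℝ} (hc : 0 < c) (a T : ℝ) (F : E → ℂ) (x : E) :
    propagateMax a (c * T) F x = ⨆ τ : Set.Ioo (-T) T, ‖propagate a F x (c * τ)‖ₑ := by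
  refine le_antisymm (iSup_le fun τ => ?_) (iSup_le fun τ => enorm_propagate_le_propagateMax ?_ F x)
  · have hτ : (τ : ℝ) / c ∈ Set.Ioo (-T) T := by
      rw [Set.mem_Ioo, lt_div_iff₀' hc, div_lt_iff₀' hc, mul_neg]
      exact τ.2
    refine le_iSup_of_le ⟨τ / c, hτ⟩ (le_of_eq ?_)
    rw [mul_div_cancel₀ _ hc.ne']
  · exact ⟨by nlinarith [τ.2.1], by nlinarith [τ.2.2]⟩

end Propagator

section MaximalFunctionFinite

theorem sq_lintegral_le {α : Type*} [MeasurableSpace α] (μ : Measure α) {g : α → ℝ≥0∞}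
    (hg : AEMeasurable g μ) : (∫⁻ x, g x ∂μ) ^ 2 ≤ μ Set.univ * ∫⁻ x, g x ^ 2 ∂μ := by
  have h := ENNReal.lintegral_mul_le_Lp_mul_Lq μ Real.HolderConjugate.two_two
    (aemeasurable_const (b := (1 : ℝ≥0∞))) hg
  simp only [Pi.mul_apply, one_mul, lintegral_const, ENNReal.rpow_ofNat, one_pow] at h
  calc (∫⁻ x, g x ∂μ) ^ 2
      ≤ (μ Set.univ ^ (1 / 2 : ℝ) * (∫⁻ x, g x ^ 2 ∂μ) ^ (1 / 2 : ℝ)) ^ 2 := by gcongr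
    _ = μ Set.univ * ∫⁻ x, g x ^ 2 ∂μ := by
        rw [mul_pow, ← ENNReal.rpow_mul_natCast, ← ENNReal.rpow_mul_natCast]
        norm_num

theorem ennreal_add_sq_le (b c : ℝ≥0∞) : (b + c) ^ 2 ≤ 2 * (b ^ 2 + c ^ 2) := by
  have h := ENNReal.rpow_add_le_mul_rpow_add_rpow b c one_le_two
  norm_num at h
  exact h

theorem enorm_le_add_lintegral_enorm_deriv {F : Type*} [NormedAddCommGroup F] [NormedSpace ℝ F]
    [CompleteSpace F] {u u' : ℝ → F} (hu : ∀ r, HasDerivAt u (u' r) r) (hu' : Continuous u')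
    {T τ : ℝ} (hτ : τ ∈ Set.Ioo (-T) T) :
    ‖u τ‖ₑ ≤ ‖u 0‖ₑ + ∫⁻ r in Set.Ioo (-T) T, ‖u' r‖ₑ := by
  have hsub : Set.uIoc 0 τ ⊆ Set.Ioo (-T) T := by
    have hT : (0 : ℝ) ∈ Set.Ioo (-T) T := ⟨by linarith [hτ.1, hτ.2], by linarith [hτ.1, hτ.2]⟩
    exact Set.uIoc_subset_uIcc.trans (Set.ordConnected_Ioo.uIcc_subset hT hτ)
  have hftc : u τ = u 0 + ∫ r in (0 : ℝ)..τ, u' r := by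
    rw [intervalIntegral.integral_eq_sub_of_hasDerivAt (fun r _ => hu r)
      (hu'.intervalIntegrable _ _), add_sub_cancel]
  calc ‖u τ‖ₑ ≤ ‖u 0‖ₑ + ‖∫ r in (0 : ℝ)..τ, u' r‖ₑ := hftc ▸ enorm_add_le _ _
    _ = ‖u 0‖ₑ + ‖∫ r in Set.uIoc 0 τ, u' r‖ₑ := by
        rw [← ofReal_norm (∫ r in (0 : ℝ)..τ, u' r),
          intervalIntegral.norm_intervalIntegral_eq, ofReal_norm]
    _ ≤ ‖u 0‖ₑ + ∫⁻ r in Set.Ioo (-T) T, ‖u' r‖ₑ := by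
        gcongr
        exact (enorm_integral_le_lintegral_enorm _).trans (lintegral_mono_set hsub)

variable {E : Type*} [NormedAddCommGroup E] [InnerProductSpace ℝ E] [FiniteDimensional ℝ E]
  [MeasurableSpace E] [BorelSpace E]

theorem propagateMax_sq_le {a : ℝ} (ha : 0 ≤ a) {F : E → ℂ} (h1 : Integrable F)
    (h1' : Integrable (generator a F)) (T : ℝ) (x : E) :
    propagateMax a T F x ^ 2 ≤ 2 * (‖propagate a F x 0‖ₑ ^ 2 + volume (Set.Ioo (-T) T) *
      ∫⁻ r in Set.Ioo (-T) T, ‖propagate a (generator a F) x r‖ₑ ^ 2) := by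
  have hcont : Continuous (propagate a (generator a F) x) :=
    (continuous_propagate ha h1').uncurry_left x
  have hderiv := hasDerivAt_propagate ha h1 h1' x
  have hsup : propagateMax a T F x ≤ ‖propagate a F x 0‖ₑ
      + ∫⁻ r in Set.Ioo (-T) T, ‖propagate a (generator a F) x r‖ₑ :=
    iSup_le fun τ => enorm_le_add_lintegral_enorm_deriv hderiv hcont τ.2
  calc propagateMax a T F x ^ 2
      ≤ (‖propagate a F x 0‖ₑ
          + ∫⁻ r in Set.Ioo (-T) T, ‖propagate a (generator a F) x r‖ₑ) ^ 2 :=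
        pow_le_pow_left' hsup 2
    _ ≤ 2 * (‖propagate a F x 0‖ₑ ^ 2
          + (∫⁻ r in Set.Ioo (-T) T, ‖propagate a (generator a F) x r‖ₑ) ^ 2) :=
        ennreal_add_sq_le _ _
    _ ≤ _ := by
        gcongr
        simpa only [Measure.restrict_apply_univ] using
          sq_lintegral_le (volume.restrict (Set.Ioo (-T) T)) hcont.enorm.aemeasurable

/-- The time derivative of the evolution is again the evolution of an `L²` datum, so Sobolev's
inequality in time bounds the maximal function. -/
theorem lintegral_propagateMax_sq_lt_top {a : ℝ} (ha : 0 ≤ a) {F : E → ℂ} (h1 : Integrable F)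
    (h2 : MemLp F 2) (h1' : Integrable (generator a F)) (h2' : MemLp (generator a F) 2) (T : ℝ) :
    ∫⁻ x, propagateMax a T F x ^ 2 < ⊤ := by
  have hmeas : Measurable fun p : E × ℝ => ‖propagate a (generator a F) p.1 p.2‖ₑ ^ 2 :=
    (continuous_propagate ha h1').measurable.enorm.pow_const 2
  have hfin : ∀ {H : E → ℂ}, MemLp H 2 → ∫⁻ η, ‖H η‖ₑ ^ 2 < ⊤ := fun hH => by
    rw [← eLpNorm_two_sq]
    exact ENNReal.pow_lt_top hH.2
  have hmeas0 : Measurable fun x => ‖propagate a F x 0‖ₑ ^ 2 :=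
    ((continuous_propagate ha h1).uncurry_right 0).measurable.enorm.pow_const 2
  refine (lintegral_mono (propagateMax_sq_le ha h1 h1' T)).trans_lt ?_
  rw [lintegral_const_mul' _ _ ENNReal.ofNat_ne_top, lintegral_add_left hmeas0,
    lintegral_enorm_propagate_sq ha h1 h2, lintegral_const_mul' _ _ measure_Ioo_lt_top.ne,
    lintegral_lintegral_swap hmeas.aemeasurable]
  simp_rw [lintegral_enorm_propagate_sq ha h1' h2', setLIntegral_const]
  exact ENNReal.mul_lt_top ENNReal.ofNat_lt_top (ENNReal.add_lt_top.2 ⟨hfin h2,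
    ENNReal.mul_lt_top measure_Ioo_lt_top (ENNReal.mul_lt_top (hfin h2') measure_Ioo_lt_top)⟩)

end MaximalFunctionFinite

section Radial

variable {E : Type*} [NormedAddCommGroup E]

/-- A function is radial if its value depends only on the norm of its argument. -/
def IsRadial {F : Type*} (f : E → F) : Prop := ∀ x y, ‖x‖ = ‖y‖ → f x = f y

theorem IsRadial.phaseFactor_mul {f : E → ℂ} (hf : IsRadial f) (a τ : ℝ) :
    IsRadial fun η => phaseFactor a τ η * f η := fun x y h => by
  simp only [phaseFactor, h, hf x y h]

variable [InnerProductSpace ℝ E]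

/-- Radial test functions whose support avoids the origin. -/
structure IsRadialTest (f : E → ℂ) : Prop where
  contDiff : ContDiff ℝ ∞ f
  hasCompactSupport : HasCompactSupport f
  zero_notMem : (0 : E) ∉ tsupport f
  radial : IsRadial f

theorem IsRadialTest.exists_schwartzMap {f : E → ℂ} (hf : IsRadialTest f) : ∃ φ : 𝓢(E, ℂ), f = φ :=
  ⟨hf.hasCompactSupport.toSchwartzMap hf.contDiff, rfl⟩

theorem IsRadialTest.comp_smul {f : E → ℂ} (hf : IsRadialTest f) {l : ℝ} (hl : l ≠ 0) :
    IsRadialTest fun x => f (l • x) where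
  contDiff := hf.contDiff.comp (contDiff_const_smul l)
  hasCompactSupport := hf.hasCompactSupport.comp_smul hl
  zero_notMem := by
    have hf0 := hf.zero_notMem
    rw [notMem_tsupport_iff_eventuallyEq] at hf0 ⊢
    have hlim : Tendsto (fun x : E => l • x) (𝓝 0) (𝓝 0) := by
      simpa only [smul_zero] using (continuous_const_smul l).tendsto (0 : E)
    exact hlim.eventually hf0
  radial x y h := hf.radial _ _ (by rw [norm_smul, norm_smul, h])

variable [FiniteDimensional ℝ E] [MeasurableSpace E] [BorelSpace E]

theorem IsRadial.fourier {F : Type*} [NormedAddCommGroup F] [NormedSpace ℂ F] {f : E → F}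
    (hf : IsRadial f) : IsRadial (𝓕 f) := fun x y h => by
  set L := (ℝ ∙ (x - y))ᗮ.reflection
  have hL : f ∘ L = f := funext fun z => hf _ _ (L.norm_map z)
  rw [← Submodule.reflection_sub h, ← Real.fourier_comp_linearIsometry L, hL]

theorem IsRadial.fourierInv {F : Type*} [NormedAddCommGroup F] [NormedSpace ℂ F] {f : E → F}
    (hf : IsRadial f) : IsRadial (𝓕⁻ f) := fun x y h => by
  rw [Real.fourierInv_eq_fourier_neg, Real.fourierInv_eq_fourier_neg]
  exact hf.fourier _ _ (by rwa [norm_neg, norm_neg])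

theorem IsRadial.propagate {F : E → ℂ} (hF : IsRadial F) (a τ : ℝ) :
    IsRadial fun x => propagate a F x τ :=
  (hF.phaseFactor_mul a τ).fourierInv

end Radial

section Dilation

variable {E : Type*} [NormedAddCommGroup E] [InnerProductSpace ℝ E]

theorem phaseFactor_inv_smul (a : ℝ) {l : ℝ} (hl : 0 < l) (τ : ℝ) (η : E) :
    phaseFactor a (l ^ a * τ) (l⁻¹ • η) = phaseFactor a τ η := by
  have hphase : l ^ a * τ * ‖l⁻¹ • η‖ ^ a = τ * ‖η‖ ^ a := by
    rw [norm_smul, norm_inv, Real.norm_of_nonneg hl.le,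
      Real.mul_rpow (inv_nonneg.2 hl.le) (norm_nonneg η), Real.inv_rpow hl.le]
    field_simp
  rw [phaseFactor, phaseFactor, hphase]

variable [FiniteDimensional ℝ E] [MeasurableSpace E] [BorelSpace E]

theorem lintegral_comp_smul (f : E → ℝ≥0∞) {r : ℝ} (hr : r ≠ 0) :
    ∫⁻ x, f (r • x) = ENNReal.ofReal |(r ^ Module.finrank ℝ E)⁻¹| * ∫⁻ x, f x := by
  rw [← smul_eq_mul, ← lintegral_smul_measure, ← Measure.map_addHaar_smul volume hr]
  exact ((Homeomorph.smulOfNeZero r hr : E ≃ₜ E).measurableEmbedding.lintegral_map f).symm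

theorem fourier_comp_smul {F : Type*} [NormedAddCommGroup F] [NormedSpace ℂ F] (f : E → F)
    {r : ℝ} (hr : r ≠ 0) (η : E) :
    𝓕 (fun x => f (r • x)) η = |(r ^ Module.finrank ℝ E)⁻¹| • 𝓕 f (r⁻¹ • η) := by
  rw [Real.fourier_eq, Real.fourier_eq, ← Measure.integral_comp_smul]
  simp only [real_inner_smul_left, real_inner_smul_right, inv_mul_cancel_left₀ hr]

theorem propagate_fourier_comp_smul (a : ℝ) (f : E → ℂ) {l : ℝ} (hl : 0 < l) (x : E) (τ : ℝ) :
    propagate a (𝓕 fun x => f (l • x)) x τ = propagate a (𝓕 f) (l • x) (l ^ a * τ) := by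
  rw [propagate_eq_integral, propagate_eq_integral]
  have hpos : 0 < l ^ Module.finrank ℝ E := by positivity
  have hscale := Measure.integral_comp_smul (volume : Measure E)
    (fun η => Complex.exp ((2 * π * ⟪η, l • x⟫_ℝ : ℝ) * Complex.I)
      * (phaseFactor a (l ^ a * τ) η * 𝓕 f η)) l⁻¹
  rw [inv_pow, inv_inv, abs_of_pos hpos] at hscale
  refine smul_right_injective ℂ hpos.ne' (Eq.trans ?_ hscale)
  dsimp only
  rw [← integral_smul]
  refine integral_congr_ae (ae_of_all _ fun η => ?_)
  simp only [real_inner_smul_left, real_inner_smul_right, fourier_comp_smul f hl.ne',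
    phaseFactor_inv_smul a hl, mul_inv_cancel_left₀ hl.ne', abs_inv, abs_of_pos hpos,
    mul_smul_comm, smul_inv_smul₀ hpos.ne']

theorem propagateMax_fourier_comp_smul (a T : ℝ) (f : E → ℂ) {l : ℝ} (hl : 0 < l) (x : E) :
    propagateMax a T (𝓕 fun x => f (l • x)) x = propagateMax a (l ^ a * T) (𝓕 f) (l • x) := by
  rw [propagateMax_mul (Real.rpow_pos_of_pos hl a)]
  simp only [propagateMax, propagate_fourier_comp_smul a f hl]

end Dilation

section MaximalEstimate

variable {E : Type*} [NormedAddCommGroup E] [InnerProductSpace ℝ E] [FiniteDimensional ℝ E]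
  [MeasurableSpace E] [BorelSpace E]

/-- The square of the inhomogeneous Sobolev norm `‖f‖_{H^s}`, up to a constant; the factor `2π` in
the weight is due to the normalisation of the Fourier transform `𝓕`. -/
def sobolevNormSq (s : ℝ) (f : E → ℂ) : ℝ≥0∞ :=
  ∫⁻ η, ENNReal.ofReal ((1 + (2 * π * ‖η‖) ^ 2) ^ s) * ‖𝓕 f η‖ₑ ^ 2

/-- The maximal estimate `‖sup_{|τ| < T} |u(·, τ)|‖_{L²}² ≤ C ‖f‖_{H^s}²` for radial test
functions `f`, where `u` is the evolution of `f`. -/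
def RadialMaximalEstimate (E : Type*) [NormedAddCommGroup E] [InnerProductSpace ℝ E]
    [FiniteDimensional ℝ E] [MeasurableSpace E] [BorelSpace E] (a s T : ℝ) (C : ℝ≥0∞) : Prop :=
  ∀ f : E → ℂ, IsRadialTest f → ∫⁻ x, propagateMax a T (𝓕 f) x ^ 2 ≤ C * sobolevNormSq s f

theorem sobolevNormSq_mono {s t : ℝ} (hst : s ≤ t) (f : E → ℂ) :
    sobolevNormSq s f ≤ sobolevNormSq t f := by
  unfold sobolevNormSq
  gcongr
  exact le_add_of_nonneg_right (sq_nonneg _)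

theorem sobolevNormSq_comp_smul_le {s l : ℝ} (hs : 0 ≤ s) (hl : 1 ≤ l) (f : E → ℂ) :
    sobolevNormSq s (fun x => f (l • x)) ≤
      ENNReal.ofReal |(l ^ Module.finrank ℝ E)⁻¹| * (ENNReal.ofReal (l ^ (2 * s)) *
        sobolevNormSq s f) := by
  have hl0 : l ≠ 0 := (one_pos.trans_le hl).ne'
  set κ : ℝ := |(l ^ Module.finrank ℝ E)⁻¹|
  have hκ : ENNReal.ofReal κ * ENNReal.ofReal |(l⁻¹ ^ Module.finrank ℝ E)⁻¹| = 1 := by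
    rw [← ENNReal.ofReal_mul (abs_nonneg _), ← abs_mul, ← mul_inv, ← mul_pow, mul_inv_cancel₀ hl0,
      one_pow, inv_one, abs_one, ENNReal.ofReal_one]
  have hweight (η : E) : (1 + (2 * π * ‖l • η‖) ^ 2) ^ s
      ≤ l ^ (2 * s) * (1 + (2 * π * ‖η‖) ^ 2) ^ s := by
    rw [Real.rpow_mul (by positivity), ← Real.mul_rpow (by positivity) (by positivity),
      Real.rpow_two, norm_smul, Real.norm_of_nonneg (zero_le_one.trans hl)]
    refine Real.rpow_le_rpow (by positivity) ?_ hs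
    nlinarith [one_le_pow₀ hl (n := 2)]
  calc sobolevNormSq s (fun x => f (l • x))
      = ENNReal.ofReal κ ^ 2 * ∫⁻ η, ENNReal.ofReal ((1 + (2 * π * ‖l • l⁻¹ • η‖) ^ 2) ^ s)
          * ‖𝓕 f (l⁻¹ • η)‖ₑ ^ 2 := by
        rw [← lintegral_const_mul' _ _ (by finiteness)]
        refine lintegral_congr fun η => ?_
        rw [smul_inv_smul₀ hl0, fourier_comp_smul f hl0, enorm_smul, mul_pow,
          Real.enorm_of_nonneg (abs_nonneg _)]
        ring
    _ = ENNReal.ofReal κ * ∫⁻ η, ENNReal.ofReal ((1 + (2 * π * ‖l • η‖) ^ 2) ^ s)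
          * ‖𝓕 f η‖ₑ ^ 2 := by
        rw [lintegral_comp_smul (fun η => ENNReal.ofReal ((1 + (2 * π * ‖l • η‖) ^ 2) ^ s)
          * ‖𝓕 f η‖ₑ ^ 2) (inv_ne_zero hl0), ← mul_assoc, sq, mul_assoc (ENNReal.ofReal κ), hκ,
          mul_one]
    _ ≤ ENNReal.ofReal κ * (ENNReal.ofReal (l ^ (2 * s)) * sobolevNormSq s f) := by
        rw [sobolevNormSq,
          ← lintegral_const_mul' (ENNReal.ofReal (l ^ (2 * s))) _ ENNReal.ofReal_ne_top]
        refine mul_le_mul_right (lintegral_mono fun η => ?_) _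
        rw [← mul_assoc, ← ENNReal.ofReal_mul (by positivity)]
        gcongr
        exact hweight η

theorem RadialMaximalEstimate.mono {a s t T : ℝ} {C : ℝ≥0∞} (h : RadialMaximalEstimate E a s T C)
    (hst : s ≤ t) : RadialMaximalEstimate E a t T C := fun f hf =>
  (h f hf).trans (mul_le_mul_right (sobolevNormSq_mono hst f) C)

theorem RadialMaximalEstimate.dilate {a s T : ℝ} {C : ℝ≥0∞} (h : RadialMaximalEstimate E a s T C)
    (hs : 0 ≤ s) {l : ℝ} (hl : 1 ≤ l) :
    RadialMaximalEstimate E a s (l ^ a * T) (C * ENNReal.ofReal (l ^ (2 * s))) := fun f hf => by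
  have hl0 : 0 < l := one_pos.trans_le hl
  have hκ : ENNReal.ofReal |(l ^ Module.finrank ℝ E)⁻¹| ≠ 0 := by
    rw [Ne, ENNReal.ofReal_eq_zero, not_le]
    positivity
  have hscaled := (h _ (hf.comp_smul hl0.ne')).trans
    (mul_le_mul_right (sobolevNormSq_comp_smul_le hs hl f) C)
  simp only [propagateMax_fourier_comp_smul a T f hl0] at hscaled
  rw [lintegral_comp_smul (fun x => propagateMax a (l ^ a * T) (𝓕 f) x ^ 2) hl0.ne',
    mul_left_comm] at hscaled
  rw [mul_assoc]
  exact (ENNReal.mul_le_mul_iff_right hκ ENNReal.ofReal_ne_top).1 hscaled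

theorem memLp_generator {a : ℝ} (ha : 0 ≤ a) (F : 𝓢(E, ℂ)) (p : ℝ≥0∞) :
    MemLp (generator a F) p := by
  have : Continuous fun η : E => ‖η‖ ^ a := continuous_norm.rpow_const fun _ => Or.inr ha
  refine ((SchwartzMap.smulLeftCLM ℂ fun η : E => (1 + ‖η‖ ^ 2) ^ (a / 2)) F).memLp p |>.of_le
    (by unfold generator; fun_prop : Continuous (generator a F)).aestronglyMeasurable
    (ae_of_all _ fun η => ?_)
  rw [SchwartzMap.smulLeftCLM_apply_apply (Function.hasTemperateGrowth_one_add_norm_sq_rpow E _)]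
  exact norm_generator_le ha F η

theorem IsRadialTest.lintegral_propagateMax_sq_lt_top {a : ℝ} (ha : 0 ≤ a) {f : E → ℂ}
    (hf : IsRadialTest f) (T : ℝ) : ∫⁻ x, propagateMax a T (𝓕 f) x ^ 2 < ⊤ := by
  obtain ⟨φ, rfl⟩ := hf.exists_schwartzMap
  exact _root_.lintegral_propagateMax_sq_lt_top ha (𝓕 φ).integrable ((𝓕 φ).memLp 2)
    (memLp_one_iff_integrable.1 (memLp_generator ha (𝓕 φ) 1)) (memLp_generator ha (𝓕 φ) 2) T

end MaximalEstimate

section EuclideanSpace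

variable {n : ℕ} (f : EuclideanSpace ℝ (Fin n) → ℂ)

theorem FT_eq_fourier (ξ : EuclideanSpace ℝ (Fin n)) : FT n f ξ = 𝓕 f ((2 * π)⁻¹ • ξ) := by
  rw [Real.fourier_eq', FT]
  refine integral_congr_ae (ae_of_all _ fun v => ?_)
  have hπ : (π : ℂ) ≠ 0 := Complex.ofReal_ne_zero.2 pi_ne_zero
  simp only [real_inner_smul_right, smul_eq_mul]
  congr 2
  push_cast
  field_simp

theorem Sosc_eq_propagate (a : ℝ) (x : EuclideanSpace ℝ (Fin n)) (t : ℝ) :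
    Sosc n a f x t = propagate a (𝓕 f) x ((2 * π) ^ a * t) := by
  have h2π : 0 < 2 * π := two_pi_pos
  have hvol : 0 < (2 * π) ^ n := by positivity
  have hscale := Measure.integral_comp_smul (volume : Measure (EuclideanSpace ℝ (Fin n)))
    (fun η => Complex.exp ((2 * π * ⟪η, x⟫_ℝ : ℝ) * Complex.I)
      * (phaseFactor a ((2 * π) ^ a * t) η * 𝓕 f η)) (2 * π)⁻¹
  rw [finrank_euclideanSpace_fin, inv_pow, inv_inv, abs_of_pos hvol] at hscale
  have hint : ∫ ξ, Complex.exp (Complex.I * ((⟪x, ξ⟫_ℝ + t * ‖ξ‖ ^ a : ℝ) : ℂ)) * FT n f ξ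
      = (2 * π) ^ n • propagate a (𝓕 f) x ((2 * π) ^ a * t) := by
    rw [propagate_eq_integral, ← hscale]
    refine integral_congr_ae (ae_of_all _ fun ξ => ?_)
    simp only [FT_eq_fourier, phaseFactor_inv_smul a h2π, real_inner_smul_left,
      mul_inv_cancel_left₀ h2π.ne']
    rw [← mul_assoc, phaseFactor, ← Complex.exp_add, ← add_mul, ← Complex.ofReal_add,
      mul_comm Complex.I, real_inner_comm]
  rw [Sosc, hint, ← Complex.ofReal_inv, ← Complex.real_smul, inv_smul_smul₀ hvol.ne']

variable {f}

theorem integral_iSup_norm_Sosc_sq {a : ℝ} (ha : 0 ≤ a) (hf : IsRadialTest f) :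
    ∫ x, (⨆ t : Set.Ioo (-1 : ℝ) 1, ‖Sosc n a f x t‖) ^ 2
      = (∫⁻ x, propagateMax a ((2 * π) ^ a) (𝓕 f) x ^ 2).toReal := by
  have hint : Integrable (𝓕 f) := by
    obtain ⟨φ, rfl⟩ := hf.exists_schwartzMap
    exact (𝓕 φ).integrable
  have hmeas := (measurable_propagateMax ha hint ((2 * π) ^ a)).pow_const 2
  rw [← integral_toReal hmeas.aemeasurable
    (ae_lt_top hmeas (hf.lintegral_propagateMax_sq_lt_top ha _).ne)]
  refine integral_congr_ae (ae_of_all _ fun x => ?_)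
  have hmax := propagateMax_mul (Real.rpow_pos_of_pos two_pi_pos a) a 1 (𝓕 f) x
  rw [mul_one] at hmax
  simp only [hmax, ENNReal.toReal_pow, ENNReal.toReal_iSup fun _ => enorm_ne_top, toReal_enorm,
    Sosc_eq_propagate]

theorem enorm_integral_weight_mul_FT_sq_le (s : ℝ) :
    ‖∫ ξ, (1 + ‖ξ‖ ^ 2) ^ s * ‖FT n f ξ‖ ^ 2‖ₑ
      ≤ ENNReal.ofReal ((2 * π) ^ n) * sobolevNormSq s f := by
  have h2π : 0 < 2 * π := two_pi_pos
  refine (enorm_integral_le_lintegral_enorm _).trans_eq ?_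
  have hscale := lintegral_comp_smul (fun η : EuclideanSpace ℝ (Fin n) =>
    ENNReal.ofReal ((1 + (2 * π * ‖η‖) ^ 2) ^ s) * ‖𝓕 f η‖ₑ ^ 2) (inv_ne_zero h2π.ne')
  rw [inv_pow, inv_inv, abs_of_pos (by positivity), finrank_euclideanSpace_fin] at hscale
  rw [sobolevNormSq, ← hscale]
  refine lintegral_congr fun ξ => ?_
  rw [enorm_mul, Real.enorm_of_nonneg (by positivity), enorm_pow, enorm_norm, FT_eq_fourier,
    norm_smul, norm_inv, Real.norm_of_nonneg h2π.le, mul_inv_cancel_left₀ h2π.ne']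

theorem radialMaximalEstimate_of_Sosc {a s C : ℝ} (ha : 0 ≤ a) (hC : 0 ≤ C)
    (h : ∀ f : EuclideanSpace ℝ (Fin n) → ℂ, IsRadialTest f →
      (∫ x, (⨆ t : Set.Ioo (-1 : ℝ) 1, ‖Sosc n a f x t‖) ^ 2) ^ (1 / 2 : ℝ)
        ≤ C * (∫ ξ, (1 + ‖ξ‖ ^ 2) ^ s * ‖FT n f ξ‖ ^ 2) ^ (1 / 2 : ℝ)) :
    RadialMaximalEstimate (EuclideanSpace ℝ (Fin n)) a s ((2 * π) ^ a)
      (ENNReal.ofReal (C ^ 2 * (2 * π) ^ n)) := by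
  intro f hf
  have hnonneg : 0 ≤ ∫ ξ, (1 + ‖ξ‖ ^ 2) ^ s * ‖FT n f ξ‖ ^ 2 :=
    integral_nonneg fun ξ => by positivity
  have hsq : (∫⁻ x, propagateMax a ((2 * π) ^ a) (𝓕 f) x ^ 2).toReal
      ≤ C ^ 2 * ∫ ξ, (1 + ‖ξ‖ ^ 2) ^ s * ‖FT n f ξ‖ ^ 2 := by
    have hroot := h f hf
    simp only [← Real.sqrt_eq_rpow] at hroot
    rwa [integral_iSup_norm_Sosc_sq ha hf, Real.sqrt_le_iff, mul_pow, Real.sq_sqrt hnonneg,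
      and_iff_right (by positivity)] at hroot
  calc ∫⁻ x, propagateMax a ((2 * π) ^ a) (𝓕 f) x ^ 2
      ≤ ENNReal.ofReal (C ^ 2 * ∫ ξ, (1 + ‖ξ‖ ^ 2) ^ s * ‖FT n f ξ‖ ^ 2) :=
        (ENNReal.le_ofReal_iff_toReal_le (hf.lintegral_propagateMax_sq_lt_top ha _).ne
          (by positivity)).2 hsq
    _ ≤ ENNReal.ofReal (C ^ 2) * (ENNReal.ofReal ((2 * π) ^ n) * sobolevNormSq s f) := by
        rw [ENNReal.ofReal_mul (sq_nonneg C), ← Real.enorm_of_nonneg hnonneg]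
        exact mul_le_mul_right (enorm_integral_weight_mul_FT_sq_le s) _
    _ = ENNReal.ofReal (C ^ 2 * (2 * π) ^ n) * sobolevNormSq s f := by
        rw [← mul_assoc, ← ENNReal.ofReal_mul (sq_nonneg C)]

end EuclideanSpace

section Young

variable {E : Type*} [NormedAddCommGroup E] [MeasurableSpace E] [BorelSpace E]
  [SecondCountableTopology E]

theorem sq_lintegral_mul_le {α : Type*} [MeasurableSpace α] (μ : Measure α) {k g : α → ℝ≥0∞}
    (hk : Measurable k) (hg : Measurable g) :
    (∫⁻ x, k x * g x ∂μ) ^ 2 ≤ (∫⁻ x, k x ∂μ) * ∫⁻ x, k x * g x ^ 2 ∂μ := by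
  have h := sq_lintegral_le (μ.withDensity k) hg.aemeasurable
  rwa [lintegral_withDensity_eq_lintegral_mul _ hk hg,
    lintegral_withDensity_eq_lintegral_mul _ hk (hg.pow_const 2),
    withDensity_apply _ MeasurableSet.univ, Measure.restrict_univ] at h

theorem lintegral_sq_lintegral_mul_sub_le (μ : Measure E) [SFinite μ] [μ.IsAddRightInvariant]
    {k M : E → ℝ≥0∞} (hk : Measurable k) (hM : Measurable M) :
    ∫⁻ x, (∫⁻ z, k z * M (x - z) ∂μ) ^ 2 ∂μ ≤ (∫⁻ z, k z ∂μ) ^ 2 * ∫⁻ x, M x ^ 2 ∂μ := by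
  have hmeas : Measurable fun p : E × E => k p.2 * M (p.1 - p.2) ^ 2 :=
    (hk.comp measurable_snd).mul ((hM.comp (by fun_prop)).pow_const 2)
  calc ∫⁻ x, (∫⁻ z, k z * M (x - z) ∂μ) ^ 2 ∂μ
      ≤ ∫⁻ x, (∫⁻ z, k z ∂μ) * ∫⁻ z, k z * M (x - z) ^ 2 ∂μ ∂μ :=
        lintegral_mono fun x => sq_lintegral_mul_le μ hk (hM.comp (by fun_prop))
    _ = (∫⁻ z, k z ∂μ) * ∫⁻ z, ∫⁻ x, k z * M (x - z) ^ 2 ∂μ ∂μ := by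
        rw [lintegral_const_mul _ hmeas.lintegral_prod_right',
          lintegral_lintegral_swap hmeas.aemeasurable]
    _ = (∫⁻ z, k z ∂μ) * ∫⁻ z, k z * ∫⁻ x, M x ^ 2 ∂μ ∂μ := by
        congr 1
        refine lintegral_congr fun z => ?_
        have hMz : Measurable fun x => M (x - z) := hM.comp (by fun_prop)
        rw [lintegral_const_mul _ (hMz.pow_const 2),
          lintegral_sub_right_eq_self fun x => M x ^ 2]
    _ = (∫⁻ z, k z ∂μ) ^ 2 * ∫⁻ x, M x ^ 2 ∂μ := by
        rw [lintegral_mul_const _ hk, sq, mul_assoc]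

end Young

section FrequencyCutoff

variable {E : Type*} [NormedAddCommGroup E] [InnerProductSpace ℝ E] [FiniteDimensional ℝ E]
  [MeasurableSpace E] [BorelSpace E]

theorem fourierInv_fourier_mul {q F : E → ℂ} (hq : Integrable q) (hF : Integrable F) (x : E) :
    𝓕⁻ (fun η => 𝓕 q η * F η) x = ∫ z, q z * 𝓕⁻ F (x - z) := by
  set G : E → ℂ := fun η => Complex.exp ((2 * π * ⟪η, x⟫_ℝ : ℝ) * Complex.I) * F η
  have hG : Integrable G :=
    hF.bdd_mul (by fun_prop : Continuous fun η : E =>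
      Complex.exp ((2 * π * ⟪η, x⟫_ℝ : ℝ) * Complex.I)).aestronglyMeasurable
      (ae_of_all _ fun η => (Complex.norm_exp_ofReal_mul_I _).le)
  have hfourier : ∀ z, 𝓕 G z = 𝓕⁻ F (x - z) := fun z => by
    rw [Real.fourier_eq', Real.fourierInv_eq']
    refine integral_congr_ae (ae_of_all _ fun η => ?_)
    simp only [G, smul_eq_mul]
    rw [← mul_assoc, ← Complex.exp_add, inner_sub_right]
    push_cast
    ring_nf
  calc 𝓕⁻ (fun η => 𝓕 q η * F η) x = ∫ η, 𝓕 q η • G η := by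
        rw [Real.fourierInv_eq']
        exact integral_congr_ae (ae_of_all _ fun η => mul_left_comm _ _ _)
    _ = ∫ z, q z * 𝓕⁻ F (x - z) := by
        rw [integral_fourier_smul_eq hq hG]
        simp only [hfourier, smul_eq_mul]

theorem propagate_fourier_mul {a : ℝ} (ha : 0 ≤ a) {q F : E → ℂ} (hq : Integrable q)
    (hF : Integrable F) (x : E) (τ : ℝ) :
    propagate a (fun η => 𝓕 q η * F η) x τ = ∫ z, q z * propagate a F (x - z) τ := by
  simp only [propagate, ← fourierInv_fourier_mul hq (integrable_phaseFactor_mul ha hF τ),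
    mul_left_comm]

theorem propagateMax_fourier_mul_le {a : ℝ} (ha : 0 ≤ a) {q F : E → ℂ} (hq : Integrable q)
    (hF : Integrable F) (T : ℝ) (x : E) :
    propagateMax a T (fun η => 𝓕 q η * F η) x ≤ ∫⁻ z, ‖q z‖ₑ * propagateMax a T F (x - z) :=
  iSup_le fun τ => by
    rw [propagate_fourier_mul ha hq hF]
    refine (enorm_integral_le_lintegral_enorm _).trans (lintegral_mono fun z => ?_)
    rw [enorm_mul]
    gcongr
    exact enorm_propagate_le_propagateMax τ.2 F _

theorem lintegral_propagateMax_fourier_mul_sq_le {a : ℝ} (ha : 0 ≤ a) {q F : E → ℂ}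
    (hq : Integrable q) (hqm : Measurable q) (hF : Integrable F) (T : ℝ) :
    ∫⁻ x, propagateMax a T (fun η => 𝓕 q η * F η) x ^ 2
      ≤ (∫⁻ z, ‖q z‖ₑ) ^ 2 * ∫⁻ x, propagateMax a T F x ^ 2 :=
  (lintegral_mono fun x => by gcongr; exact propagateMax_fourier_mul_le ha hq hF T x).trans
    (lintegral_sq_lintegral_mul_sub_le volume hqm.enorm (measurable_propagateMax ha hF T))

end FrequencyCutoff

section Polar

variable {E : Type*} [NormedAddCommGroup E] [NormedSpace ℝ E] [FiniteDimensional ℝ E]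
  [MeasurableSpace E] [BorelSpace E] [Nontrivial E] (μ : Measure E) [μ.IsAddHaarMeasure]

theorem lintegral_fun_norm_eq {f : ℝ → ℝ≥0∞} (hf : Measurable f) :
    ∫⁻ x, f ‖x‖ ∂μ = μ.toSphere Set.univ *
      ∫⁻ r in Set.Ioi (0 : ℝ), ENNReal.ofReal (r ^ (Module.finrank ℝ E - 1)) * f r := by
  have hv : Measurable fun r : Set.Ioi (0 : ℝ) => f r := hf.comp measurable_subtype_coe
  have hpolar := μ.measurePreserving_homeomorphUnitSphereProd.lintegral_comp
    (f := fun p => f p.2) (hv.comp measurable_snd)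
  simp only [homeomorphUnitSphereProd_apply_snd_coe] at hpolar
  calc ∫⁻ x, f ‖x‖ ∂μ = ∫⁻ x in ({0}ᶜ : Set E), f ‖x‖ ∂μ := by rw [restrict_compl_singleton]
    _ = ∫⁻ x : ({0}ᶜ : Set E), f ‖x.1‖ ∂(μ.comap (↑)) :=
        (lintegral_subtype_comap (measurableSet_singleton _).compl fun x => f ‖x‖).symm
    _ = μ.toSphere Set.univ *
          ∫⁻ r : Set.Ioi (0 : ℝ), f r ∂(Measure.volumeIoiPow (Module.finrank ℝ E - 1)) := by
        rw [hpolar, lintegral_prod _ (by exact (hv.comp measurable_snd).aemeasurable)]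
        simp only [lintegral_const, mul_comm]
    _ = _ := by
        rw [Measure.volumeIoiPow, lintegral_withDensity_eq_lintegral_mul _ (by fun_prop) hv,
          ← lintegral_subtype_comap measurableSet_Ioi]
        rfl

theorem mul_lintegral_Ioo_le_lintegral_fun_norm {f : ℝ → ℝ≥0∞} (hf : Measurable f) {R : ℝ}
    (hR : 0 ≤ R) (D : ℝ) :
    μ.toSphere Set.univ * (ENNReal.ofReal (R ^ (Module.finrank ℝ E - 1)) *
      ∫⁻ r in Set.Ioo R (R + D), f r) ≤ ∫⁻ x, f ‖x‖ ∂μ := by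
  rw [lintegral_fun_norm_eq μ hf, ← lintegral_const_mul _ hf]
  gcongr μ.toSphere Set.univ * ?_
  calc ∫⁻ r in Set.Ioo R (R + D), ENNReal.ofReal (R ^ (Module.finrank ℝ E - 1)) * f r
      ≤ ∫⁻ r in Set.Ioo R (R + D), ENNReal.ofReal (r ^ (Module.finrank ℝ E - 1)) * f r :=
        setLIntegral_mono (by fun_prop) fun r hr => by gcongr; exact hr.1.le
    _ ≤ ∫⁻ r in Set.Ioi 0, ENNReal.ofReal (r ^ (Module.finrank ℝ E - 1)) * f r :=
        lintegral_mono_set fun r hr => hR.trans_lt hr.1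

theorem measure_norm_mem_Icc_le {r₁ : ℝ} (r₂ : ℝ) (hr : 0 ≤ r₁) :
    μ {x | ‖x‖ ∈ Set.Icc r₁ r₂} ≤ μ.toSphere Set.univ *
      (ENNReal.ofReal (r₂ ^ (Module.finrank ℝ E - 1)) * ENNReal.ofReal (r₂ - r₁)) := by
  have hmeas : Measurable ((Set.Icc r₁ r₂).indicator (1 : ℝ → ℝ≥0∞)) :=
    measurable_one.indicator measurableSet_Icc
  calc μ {x | ‖x‖ ∈ Set.Icc r₁ r₂} = ∫⁻ x, (Set.Icc r₁ r₂).indicator 1 ‖x‖ ∂μ :=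
        (lintegral_indicator_one (measurableSet_Icc.preimage measurable_norm)).symm
    _ = μ.toSphere Set.univ * ∫⁻ r in Set.Ioi (0 : ℝ),
          ENNReal.ofReal (r ^ (Module.finrank ℝ E - 1)) * (Set.Icc r₁ r₂).indicator 1 r :=
        lintegral_fun_norm_eq μ hmeas
    _ ≤ μ.toSphere Set.univ * ∫⁻ r, ENNReal.ofReal (r₂ ^ (Module.finrank ℝ E - 1)) *
          (Set.Icc r₁ r₂).indicator 1 r := by
        gcongr μ.toSphere Set.univ * ?_
        refine (setLIntegral_le_lintegral _ _).trans (lintegral_mono fun r => ?_)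
        by_cases hmem : r ∈ Set.Icc r₁ r₂
        · gcongr
          exacts [hr.trans hmem.1, hmem.2]
        · simp only [Set.indicator_of_notMem hmem, mul_zero, le_refl]
    _ = _ := by
        rw [lintegral_const_mul _ hmeas, lintegral_indicator_one measurableSet_Icc,
          Real.volume_Icc]

end Polar

section Ray

variable {E : Type*} [NormedAddCommGroup E] [InnerProductSpace ℝ E] [FiniteDimensional ℝ E]
  [MeasurableSpace E] [BorelSpace E] [Nontrivial E]

theorem lintegral_propagate_ray_le {a : ℝ} (ha : 0 ≤ a) {F : E → ℂ} (hF : IsRadial F)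
    (hint : Integrable F) {T D R : ℝ} (hR : 0 ≤ R) {t : ℝ → ℝ} (ht : Continuous t)
    (htT : ∀ y ∈ Set.Ioo 0 D, t y ∈ Set.Ioo (-T) T) {e : E} (he : ‖e‖ = 1) :
    (volume : Measure E).toSphere Set.univ * (ENNReal.ofReal (R ^ (Module.finrank ℝ E - 1)) *
      ∫⁻ y in Set.Ioo 0 D, ‖propagate a F ((R + y) • e) (t y)‖ₑ ^ 2)
      ≤ ∫⁻ x, propagateMax a T F x ^ 2 := by
  set u : ℝ → ℝ≥0∞ := fun r => ‖propagate a F (r • e) (t (r - R))‖ₑ ^ 2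
  have hu : Measurable u := by
    have hcont := (continuous_propagate ha hint).comp
      (by fun_prop : Continuous fun r : ℝ => (r • e, t (r - R)))
    exact hcont.measurable.enorm.pow_const 2
  have hshift : ∫⁻ y in Set.Ioo 0 D, ‖propagate a F ((R + y) • e) (t y)‖ₑ ^ 2
      = ∫⁻ r in Set.Ioo R (R + D), (Set.Ioo R (R + D)).indicator u r := by
    have hpre : (fun y => R + y) ⁻¹' Set.Ioo R (R + D) = Set.Ioo 0 D := by
      rw [Set.preimage_const_add_Ioo, sub_self, add_sub_cancel_left]
    rw [setLIntegral_indicator measurableSet_Ioo, Set.inter_self,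
      ← (measurePreserving_add_left volume R).setLIntegral_comp_preimage measurableSet_Ioo hu, hpre]
    simp only [u, add_sub_cancel_left]
  rw [hshift]
  refine (mul_lintegral_Ioo_le_lintegral_fun_norm volume (hu.indicator measurableSet_Ioo)
    hR D).trans (lintegral_mono fun x => Set.indicator_apply_le' (fun hx => ?_) fun _ => zero_le)
  have hnorm : ‖‖x‖ • e‖ = ‖x‖ := by rw [norm_smul, norm_norm, he, mul_one]
  have hrot : propagate a F (‖x‖ • e) (t (‖x‖ - R)) = propagate a F x (t (‖x‖ - R)) :=
    hF.propagate a _ _ _ hnorm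
  simp only [u, hrot]
  gcongr
  exact enorm_propagate_le_propagateMax
    (htT _ ⟨sub_pos.2 hx.1, sub_lt_iff_lt_add'.2 hx.2⟩) F x

end Ray

section AnnulusCutoff

/-- A bump function on the line, equal to `1` on `[7/16, 25/16]` and vanishing off
`[1/4, 7/4]`. -/
def annulusBump : ContDiffBump (1 : ℝ) := ⟨9 / 16, 3 / 4, by norm_num, by norm_num⟩

/-- A smooth radial frequency cutoff to an annulus around the unit sphere; composing with `‖η‖²`
rather than with `‖η‖` makes it smooth at the origin. -/
def annulusCutoff {E : Type*} [NormedAddCommGroup E] (η : E) : ℂ := (annulusBump (‖η‖ ^ 2) : ℂ)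

section Norm

variable {E : Type*} [NormedAddCommGroup E]

theorem isRadial_annulusCutoff : IsRadial (annulusCutoff : E → ℂ) := fun x y h => by
  rw [annulusCutoff, annulusCutoff, h]

theorem norm_annulusCutoff_le_one (η : E) : ‖annulusCutoff η‖ ≤ 1 := by
  rw [annulusCutoff, Complex.norm_real, Real.norm_of_nonneg annulusBump.nonneg]
  exact annulusBump.le_one

theorem annulusCutoff_eq_one {η : E} (h : ‖η‖ ∈ Set.Icc (3 / 4) (5 / 4)) :
    annulusCutoff η = 1 := by
  rw [annulusCutoff, annulusBump.one_of_mem_closedBall, Complex.ofReal_one]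
  rw [Metric.mem_closedBall, Real.dist_eq, abs_le, annulusBump]
  constructor <;> nlinarith [h.1, h.2]

theorem annulusCutoff_eq_zero_of_lt {η : E} (h : ‖η‖ < 1 / 2) : annulusCutoff η = 0 := by
  rw [annulusCutoff, annulusBump.zero_of_le_dist, Complex.ofReal_zero]
  rw [Real.dist_eq, annulusBump]
  refine le_trans ?_ (neg_le_abs _)
  nlinarith [norm_nonneg η]

theorem annulusCutoff_eq_zero_of_gt {η : E} (h : 2 < ‖η‖) : annulusCutoff η = 0 := by
  rw [annulusCutoff, annulusBump.zero_of_le_dist, Complex.ofReal_zero]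
  rw [Real.dist_eq, annulusBump]
  refine le_trans ?_ (le_abs_self _)
  nlinarith [norm_nonneg η]

end Norm

variable {E : Type*} [NormedAddCommGroup E] [InnerProductSpace ℝ E]

theorem contDiff_annulusCutoff : ContDiff ℝ ∞ (annulusCutoff : E → ℂ) :=
  Complex.ofRealCLM.contDiff.comp (annulusBump.contDiff.comp (contDiff_norm_sq ℝ))

theorem contDiff_phaseFactor_mul_annulusCutoff (a τ : ℝ) :
    ContDiff ℝ ∞ fun η : E => phaseFactor a τ η * annulusCutoff η := by
  refine contDiff_iff_contDiffAt.2 fun η => ?_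
  rcases eq_or_ne η 0 with rfl | hη
  · have hzero : (fun η : E => phaseFactor a τ η * annulusCutoff η) =ᶠ[𝓝 0] fun _ => 0 := by
      filter_upwards [Metric.ball_mem_nhds (0 : E) one_half_pos] with ξ hξ
      rw [annulusCutoff_eq_zero_of_lt (mem_ball_zero_iff.1 hξ), mul_zero]
    exact contDiffAt_const.congr_of_eventuallyEq hzero
  · have hpow : ContDiffAt ℝ ∞ (fun η : E => ‖η‖ ^ a) η :=
      (contDiffAt_norm ℝ hη).rpow_const_of_ne (norm_ne_zero_iff.2 hη)
    have hphase : ContDiffAt ℝ ∞ (fun η : E => ((τ * ‖η‖ ^ a : ℝ) : ℂ)) η :=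
      Complex.ofRealCLM.contDiff.contDiffAt.comp η (contDiffAt_const.mul hpow)
    exact (hphase.mul contDiffAt_const).cexp.mul contDiff_annulusCutoff.contDiffAt

variable [FiniteDimensional ℝ E]

theorem hasCompactSupport_annulusCutoff : HasCompactSupport (annulusCutoff : E → ℂ) :=
  .intro (isCompact_closedBall (0 : E) 2) fun η hη =>
    annulusCutoff_eq_zero_of_gt (by rwa [mem_closedBall_zero_iff, not_le] at hη)

variable [MeasurableSpace E] [BorelSpace E]

variable (E) in
/-- The convolution kernel of the frequency-localised evolution at time `τ`, that is, the inverse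
Fourier transform of `e^{iτ|η|^a}` times the cutoff. -/
def annulusKernel (a τ : ℝ) : 𝓢(E, ℂ) :=
  𝓕⁻ (hasCompactSupport_annulusCutoff.mul_left.toSchwartzMap
    (contDiff_phaseFactor_mul_annulusCutoff a τ) : 𝓢(E, ℂ))

theorem fourier_annulusKernel (a τ : ℝ) :
    𝓕 (annulusKernel E a τ : E → ℂ) = fun η => phaseFactor a τ η * annulusCutoff η := by
  rw [← SchwartzMap.fourier_coe, annulusKernel, FourierTransform.fourier_fourierInv_eq]
  rfl

theorem annulusCutoff_eq_fourier :
    (annulusCutoff : E → ℂ) = 𝓕 (annulusKernel E 0 0 : E → ℂ) := by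
  rw [fourier_annulusKernel]
  funext η
  simp only [phaseFactor, zero_mul, Complex.ofReal_zero, Complex.exp_zero, one_mul]

theorem propagate_annulusCutoff_mul_fourier (a τ : ℝ) (f : 𝓢(E, ℂ)) (x : E) :
    propagate a (fun η => annulusCutoff η * 𝓕 (f : E → ℂ) η) x τ
      = ∫ z, annulusKernel E a τ z * f (x - z) := by
  have hint : Integrable (𝓕 (f : E → ℂ)) := by
    rw [← SchwartzMap.fourier_coe]
    exact (𝓕 f).integrable
  have hinv : 𝓕⁻ (𝓕 (f : E → ℂ)) = f :=
    f.continuous.fourierInv_fourier_eq f.integrable hint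
  have hconv := fourierInv_fourier_mul (annulusKernel E a τ).integrable hint x
  simpa only [hinv, fourier_annulusKernel, mul_assoc] using! hconv

end AnnulusCutoff

section Linearization

theorem one_add_rpow_sub_isBigO_sq (a : ℝ) :
    (fun x : ℝ => (1 + x) ^ a - (1 + a * x)) =O[𝓝 0] fun x => x ^ 2 := by
  have h := (Real.one_add_rpow_hasFPowerSeriesAt_zero (a := a)).isBigO_sub_partialSum_pow 2
  simpa [FormalMultilinearSeries.partialSum, Finset.sum_range_succ, binomialSeries,
    mul_comm a] using h

theorem norm_exp_ofReal_mul_I_sub_le (α β : ℝ) :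
    ‖Complex.exp (α * Complex.I) - Complex.exp (β * Complex.I)‖ ≤ |α - β| := by
  have hfactor : Complex.exp (α * Complex.I) - Complex.exp (β * Complex.I)
      = Complex.exp (β * Complex.I) * (Complex.exp (Complex.I * (α - β : ℝ)) - 1) := by
    rw [mul_sub, mul_one, ← Complex.exp_add]
    push_cast
    ring_nf
  rw [hfactor, norm_mul, Complex.norm_exp_ofReal_mul_I, one_mul]
  exact Real.norm_exp_I_mul_ofReal_sub_one_le

variable {E : Type*} [NormedAddCommGroup E] [NormedSpace ℝ E]

theorem exists_norm_phaseFactor_mul_annulusCutoff_sub_le (a : ℝ) {e : E} (he : ‖e‖ = 1) :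
    ∃ K > 0, ∀ τ x : ℝ, ‖phaseFactor a τ ((1 + x) • e) * annulusCutoff ((1 + x) • e)
      - Complex.exp ((τ * (1 + a * x) : ℝ) * Complex.I)‖ ≤ K * (|τ| + 1) * x ^ 2 := by
  obtain ⟨L, hL, hbound⟩ := (one_add_rpow_sub_isBigO_sq a).exists_pos
  obtain ⟨ρ, hρ, hball⟩ := Metric.eventually_nhds_iff_ball.1 hbound.bound
  set r := min ρ (1 / 4)
  have hr : 0 < r := lt_min hρ (by norm_num)
  refine ⟨L + 2 / r ^ 2, by positivity, fun τ x => ?_⟩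
  rcases lt_or_ge |x| r with hx | hx
  · have hx4 := abs_lt.1 (hx.trans_le (min_le_right ρ (1 / 4)))
    have hnorm : ‖(1 + x) • e‖ = 1 + x := by
      rw [norm_smul, he, mul_one, Real.norm_of_nonneg (by linarith [hx4.1])]
    have htaylor := hball x (by simpa using hx.trans_le (min_le_left ρ (1 / 4)))
    rw [annulusCutoff_eq_one (by rw [hnorm]; constructor <;> linarith [hx4.1, hx4.2]), mul_one,
      phaseFactor, hnorm]
    calc _ ≤ |τ * (1 + x) ^ a - τ * (1 + a * x)| := norm_exp_ofReal_mul_I_sub_le _ _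
      _ = |τ| * ‖(1 + x) ^ a - (1 + a * x)‖ := by rw [← mul_sub, abs_mul, Real.norm_eq_abs]
      _ ≤ |τ| * (L * ‖x ^ 2‖) := by gcongr
      _ = L * |τ| * x ^ 2 := by rw [Real.norm_of_nonneg (sq_nonneg x)]; ring
      _ ≤ (L + 2 / r ^ 2) * (|τ| + 1) * x ^ 2 := by
          gcongr
          · exact le_add_of_nonneg_right (by positivity)
          · exact le_add_of_nonneg_right zero_le_one
  · calc _ ≤ ‖phaseFactor a τ ((1 + x) • e) * annulusCutoff ((1 + x) • e)‖
          + ‖Complex.exp ((τ * (1 + a * x) : ℝ) * Complex.I)‖ := norm_sub_le _ _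
      _ ≤ 1 + 1 := by
          rw [norm_mul, norm_phaseFactor, one_mul, Complex.norm_exp_ofReal_mul_I]
          gcongr
          exact norm_annulusCutoff_le_one _
      _ = 2 / r ^ 2 * 1 * r ^ 2 := by field_simp; norm_num
      _ ≤ (L + 2 / r ^ 2) * (|τ| + 1) * x ^ 2 := by
          rw [← sq_abs x]
          gcongr
          · exact le_add_of_nonneg_left hL.le
          · exact le_add_of_nonneg_left (abs_nonneg τ)

end Linearization

section WavePacket

/-- A bump function on the line, equal to `1` on `[-1/2, 1/2]` and vanishing off `[-1, 1]`. -/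
def lineBump : ContDiffBump (0 : ℝ) := ⟨1 / 2, 1, by norm_num, by norm_num⟩

/-- A wave packet of width `A` and unit frequency on the line. -/
def profile (A v : ℝ) : ℂ := Complex.exp ((2 * π * v : ℝ) * Complex.I) * (lineBump (v / A) : ℂ)

/-- A radial wave packet of width comparable to `A` concentrated near the sphere of radius `R`.
The phase `(‖x‖² - R²) / (2R)` agrees with `‖x‖ - R` to first order on the sphere; being
polynomial, it keeps the derivatives of the packet easy to bound. -/
def packet {E : Type*} [NormedAddCommGroup E] (A R : ℝ) (x : E) : ℂ :=
  profile A ((‖x‖ ^ 2 - R ^ 2) / (2 * R))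

theorem contDiff_lineBump_ofReal : ContDiff ℝ ∞ fun v : ℝ => (lineBump v : ℂ) :=
  Complex.ofRealCLM.contDiff.comp lineBump.contDiff

theorem hasCompactSupport_lineBump_ofReal : HasCompactSupport fun v : ℝ => (lineBump v : ℂ) :=
  lineBump.hasCompactSupport.comp_left Complex.ofReal_zero

theorem contDiff_exp_two_pi_mul_I :
    ContDiff ℝ ∞ fun v : ℝ => Complex.exp ((2 * π * v : ℝ) * Complex.I) :=
  ((Complex.ofRealCLM.contDiff.comp (contDiff_const.mul contDiff_id)).mul contDiff_const).cexp

theorem contDiff_profile (A : ℝ) : ContDiff ℝ ∞ (profile A) :=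
  contDiff_exp_two_pi_mul_I.mul (contDiff_lineBump_ofReal.comp (contDiff_id.div_const A))

theorem norm_profile_le_one (A v : ℝ) : ‖profile A v‖ ≤ 1 := by
  rw [profile, norm_mul, Complex.norm_exp_ofReal_mul_I, one_mul, Complex.norm_real,
    Real.norm_of_nonneg lineBump.nonneg]
  exact lineBump.le_one

theorem profile_eq_zero {A v : ℝ} (hA : 0 < A) (h : A ≤ |v|) : profile A v = 0 := by
  rw [profile, lineBump.zero_of_le_dist, Complex.ofReal_zero, mul_zero]
  rw [Real.dist_eq, sub_zero, abs_div, abs_of_pos hA]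
  exact (le_div_iff₀ hA).2 (by rwa [lineBump, one_mul])

theorem exists_profile_eq_integral : ∃ p : 𝓢(ℝ, ℂ), ∫ μ, p μ = 1 ∧
    ∀ A v, profile A v
      = ∫ μ, Complex.exp ((2 * π * (v * (1 + μ / A)) : ℝ) * Complex.I) * p μ := by
  set ψ : 𝓢(ℝ, ℂ) := hasCompactSupport_lineBump_ofReal.toSchwartzMap contDiff_lineBump_ofReal
  have hinv (v : ℝ) : (lineBump v : ℂ)
      = ∫ μ, Complex.exp ((2 * π * (v * μ) : ℝ) * Complex.I) * 𝓕 ψ μ := by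
    have h : ψ v = 𝓕⁻ (𝓕 ψ) v := by rw [FourierTransform.fourierInv_fourier_eq]
    rw [SchwartzMap.fourierInv_coe, Real.fourierInv_eq'] at h
    simpa [ψ, mul_comm v] using h
  refine ⟨𝓕 ψ, ?_, fun A v => ?_⟩
  · have hone : lineBump 0 = 1 :=
      lineBump.one_of_mem_closedBall (Metric.mem_closedBall_self lineBump.rIn_pos.le)
    simpa [hone] using (hinv 0).symm
  · rw [profile, hinv, ← integral_const_mul]
    congr! 2 with _
    rw [← mul_assoc, ← Complex.exp_add]
    push_cast
    ring_nf

end WavePacket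

section LimitProfile

variable {E : Type*} [NormedAddCommGroup E] [InnerProductSpace ℝ E] [FiniteDimensional ℝ E]
  [MeasurableSpace E] [BorelSpace E]

theorem integral_mul_integral_exp_eq {q : E → ℂ} {p : ℝ → ℂ} {g : ℝ → ℝ} (hq : Integrable q)
    (hp : Integrable p) (hg : Continuous g) (e : E) (y : ℝ) :
    ∫ z, q z * ∫ μ, Complex.exp ((2 * π * ((y - ⟪e, z⟫_ℝ) * g μ) : ℝ) * Complex.I) * p μ
      = ∫ μ, Complex.exp ((2 * π * (y * g μ) : ℝ) * Complex.I) * p μ * 𝓕 q (g μ • e) := by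
  simp_rw [Real.fourier_eq' q, ← integral_const_mul]
  rw [integral_integral_swap]
  · refine integral_congr_ae (ae_of_all _ fun μ => integral_congr_ae (ae_of_all _ fun z => ?_))
    have hphase : ((2 * π * ((y - ⟪e, z⟫_ℝ) * g μ) : ℝ) : ℂ) * Complex.I
        = ((2 * π * (y * g μ) : ℝ) : ℂ) * Complex.I
          + ((-2 * π * ⟪z, g μ • e⟫_ℝ : ℝ) : ℂ) * Complex.I := by
      rw [real_inner_smul_right, real_inner_comm e z]
      push_cast
      ring
    simp only [hphase, Complex.exp_add, smul_eq_mul]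
    ring
  · have hcont : Continuous fun w : E × ℝ =>
        Complex.exp (((2 * π * ((y - ⟪e, w.1⟫_ℝ) * g w.2) : ℝ) : ℂ) * Complex.I) := by
      fun_prop
    refine ((hq.mul_prod hp).bdd_mul hcont.aestronglyMeasurable
      (ae_of_all _ fun w => (Complex.norm_exp_ofReal_mul_I _).le)).congr (ae_of_all _ fun w => ?_)
    exact mul_left_comm _ _ _

-- `a * τ = -2πy` places the observer at the point reached with the group velocity, where the
-- first-order terms of the two phases cancel.
theorem exp_two_pi_mul_add_eq {a τ y : ℝ} (hτ : a * τ = -(2 * π * y)) (x : ℝ) :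
    Complex.exp ((2 * π * y + τ : ℝ) * Complex.I)
      = Complex.exp ((2 * π * (y * (1 + x)) : ℝ) * Complex.I)
        * Complex.exp ((τ * (1 + a * x) : ℝ) * Complex.I) := by
  rw [← Complex.exp_add, ← add_mul, ← Complex.ofReal_add]
  congr 3
  linear_combination (-x) * hτ

theorem norm_integral_exp_mul_sub_le {p : 𝓢(ℝ, ℂ)} (hp : ∫ μ, p μ = 1) {m : ℝ → ℂ}
    (hm : Continuous m) (hm_le : ∀ μ, ‖m μ‖ ≤ 1) {a τ y A c : ℝ} (hτ : a * τ = -(2 * π * y))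
    (hclose : ∀ μ, ‖m μ - Complex.exp ((τ * (1 + a * (μ / A)) : ℝ) * Complex.I)‖ ≤ c * ‖μ‖ ^ 2) :
    ‖(∫ μ, Complex.exp ((2 * π * (y * (1 + μ / A)) : ℝ) * Complex.I) * p μ * m μ)
      - Complex.exp ((2 * π * y + τ : ℝ) * Complex.I)‖ ≤ c * ∫ μ, ‖μ‖ ^ 2 * ‖p μ‖ := by
  set wave : ℝ → ℂ := fun μ => Complex.exp ((2 * π * (y * (1 + μ / A)) : ℝ) * Complex.I) * p μ
  have hwave : Integrable wave := p.integrable.bdd_mul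
    (by fun_prop : Continuous _).aestronglyMeasurable
    (ae_of_all _ fun μ => (Complex.norm_exp_ofReal_mul_I _).le)
  have hprod : Integrable fun μ => wave μ * m μ :=
    hwave.mul_bdd hm.aestronglyMeasurable (ae_of_all _ hm_le)
  have hlimit : Complex.exp ((2 * π * y + τ : ℝ) * Complex.I)
      = ∫ μ, Complex.exp ((2 * π * y + τ : ℝ) * Complex.I) * p μ := by
    rw [integral_const_mul, hp, mul_one]
  have hcancel (μ : ℝ) : wave μ * m μ - Complex.exp ((2 * π * y + τ : ℝ) * Complex.I) * p μ
      = wave μ * (m μ - Complex.exp ((τ * (1 + a * (μ / A)) : ℝ) * Complex.I)) := by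
    rw [exp_two_pi_mul_add_eq hτ (μ / A)]
    ring
  rw [hlimit, ← integral_sub hprod (p.integrable.const_mul _), ← integral_const_mul]
  refine norm_integral_le_of_norm_le ((p.integrable_pow_mul volume 2).const_mul c)
    (ae_of_all _ fun μ => ?_)
  rw [hcancel, norm_mul, norm_mul, Complex.norm_exp_ofReal_mul_I, one_mul]
  calc _ ≤ ‖p μ‖ * (c * ‖μ‖ ^ 2) := by gcongr; exact hclose μ
    _ = c * (‖μ‖ ^ 2 * ‖p μ‖) := by ring

theorem exists_norm_integral_annulusKernel_mul_profile_sub_le (a : ℝ) {e : E} (he : ‖e‖ = 1) :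
    ∃ K > 0, ∀ A y τ : ℝ, a * τ = -(2 * π * y) →
      ‖(∫ z, annulusKernel E a τ z * profile A (y - ⟪e, z⟫_ℝ))
        - Complex.exp ((2 * π * y + τ : ℝ) * Complex.I)‖ ≤ K * (|τ| + 1) / A ^ 2 := by
  obtain ⟨K, hK, hbound⟩ := exists_norm_phaseFactor_mul_annulusCutoff_sub_le a he
  obtain ⟨p, hp_one, hp⟩ := exists_profile_eq_integral
  set M := ∫ μ, ‖μ‖ ^ 2 * ‖p μ‖
  have : 0 ≤ M := integral_nonneg fun μ => by positivity
  refine ⟨K * (M + 1), by positivity, fun A y τ hτ => ?_⟩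
  have hexchange : ∫ z, annulusKernel E a τ z * profile A (y - ⟪e, z⟫_ℝ)
      = ∫ μ, Complex.exp ((2 * π * (y * (1 + μ / A)) : ℝ) * Complex.I) * p μ
        * (phaseFactor a τ ((1 + μ / A) • e) * annulusCutoff ((1 + μ / A) • e)) := by
    simp_rw [hp]
    rw [integral_mul_integral_exp_eq (annulusKernel E a τ).integrable p.integrable
      (by fun_prop : Continuous fun μ : ℝ => 1 + μ / A), fourier_annulusKernel]
  rw [hexchange]
  refine (norm_integral_exp_mul_sub_le hp_one (c := K * (|τ| + 1) / A ^ 2)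
    ((contDiff_phaseFactor_mul_annulusCutoff a τ).continuous.comp (by fun_prop)) (fun μ => ?_) hτ
    fun μ => (hbound τ (μ / A)).trans_eq ?_).trans ?_
  · rw [Function.comp_apply, norm_mul, norm_phaseFactor, one_mul]
    exact norm_annulusCutoff_le_one _
  · rw [Real.norm_eq_abs, sq_abs]
    ring
  · calc K * (|τ| + 1) / A ^ 2 * M ≤ K * (|τ| + 1) / A ^ 2 * (M + 1) := by
          gcongr; exact le_add_of_nonneg_right zero_le_one
      _ = K * (M + 1) * (|τ| + 1) / A ^ 2 := by ring

theorem exists_half_le_norm_integral_annulusKernel_mul_profile {a : ℝ} (ha : 0 < a) {e : E}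
    (he : ‖e‖ = 1) : ∃ κ > 0, 2 * π / a * κ ≤ 1 ∧ ∃ A₀ > 0, ∀ A ≥ A₀,
      ∀ y ∈ Set.Ioo 0 (κ * A ^ 2),
        1 / 2 ≤ ‖∫ z, annulusKernel E a (-(2 * π / a * y)) z * profile A (y - ⟪e, z⟫_ℝ)‖ := by
  obtain ⟨K, hK, hbound⟩ := exists_norm_integral_annulusKernel_mul_profile_sub_le a he
  set b := 2 * π / a
  have hb : 0 < b := by positivity
  set κ := min (1 / b) (1 / (4 * K * b))
  have hκ : 0 < κ := by positivity
  have hκ_one : b * κ ≤ 1 := (le_div_iff₀' hb).1 (min_le_left _ _)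
  have hκ_quarter : 4 * K * b * κ ≤ 1 := (le_div_iff₀' (by positivity)).1 (min_le_right _ _)
  refine ⟨κ, hκ, hκ_one, 1 + 4 * K, by positivity, fun A hA y hy => ?_⟩
  have hA_pos : 0 < A := lt_of_lt_of_le (by positivity) hA
  have hA_sq : 4 * K ≤ A ^ 2 := by nlinarith
  have hy_le : 4 * K * (b * y) ≤ A ^ 2 := by
    calc 4 * K * (b * y) ≤ 4 * K * (b * (κ * A ^ 2)) := by gcongr; exact hy.2.le
      _ = 4 * K * b * κ * A ^ 2 := by ring
      _ ≤ 1 * A ^ 2 := by gcongr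
      _ = A ^ 2 := one_mul _
  have herror : K * (|-(b * y)| + 1) / A ^ 2 ≤ 1 / 2 := by
    rw [abs_neg, abs_of_pos (mul_pos hb hy.1), div_le_iff₀ (by positivity)]
    linarith
  have hclose := hbound A y (-(b * y)) (by simp only [b]; field_simp)
  have htri := norm_sub_norm_le (Complex.exp ((2 * π * y + -(b * y) : ℝ) * Complex.I))
    (∫ z, annulusKernel E a (-(b * y)) z * profile A (y - ⟪e, z⟫_ℝ))
  rw [norm_sub_rev, Complex.norm_exp_ofReal_mul_I] at htri
  linarith

end LimitProfile

section Packet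

variable {E : Type*} [NormedAddCommGroup E]

theorem abs_lt_of_packet_ne_zero {A R : ℝ} (hA : 0 < A) {x : E} (hx : packet A R x ≠ 0) :
    |(‖x‖ ^ 2 - R ^ 2) / (2 * R)| < A :=
  not_le.1 fun h => hx (profile_eq_zero hA h)

theorem norm_mem_Icc_of_packet_ne_zero {A R : ℝ} (hA : 0 < A) (hR : 2 * A < R) {x : E}
    (hx : packet A R x ≠ 0) : ‖x‖ ∈ Set.Icc (R - 2 * A) (R + A) := by
  have hR_pos : 0 < R := by linarith
  obtain ⟨hlow, hup⟩ := abs_lt.1 (abs_lt_of_packet_ne_zero hA hx)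
  rw [lt_div_iff₀ (by positivity)] at hlow
  rw [div_lt_iff₀ (by positivity)] at hup
  constructor <;> nlinarith [norm_nonneg x]

theorem tsupport_packet_subset {A R : ℝ} (hA : 0 < A) (hR : 2 * A < R) :
    tsupport (packet A R : E → ℂ) ⊆ {x | ‖x‖ ∈ Set.Icc (R - 2 * A) (R + A)} :=
  closure_minimal (fun _ hx => norm_mem_Icc_of_packet_ne_zero hA hR hx)
    (isClosed_Icc.preimage continuous_norm)

variable [InnerProductSpace ℝ E]

theorem contDiff_packet (A R : ℝ) : ContDiff ℝ ∞ (packet A R : E → ℂ) :=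
  (contDiff_profile A).comp (((contDiff_norm_sq ℝ).sub contDiff_const).div_const _)

theorem tendsto_packet (A : ℝ) {e : E} (he : ‖e‖ = 1) (y : ℝ) (z : E) :
    Tendsto (fun R : ℝ => packet A R ((R + y) • e - z)) atTop (𝓝 (profile A (y - ⟪e, z⟫_ℝ))) := by
  refine ((contDiff_profile A).continuous.tendsto _).comp ?_
  have hlim : Tendsto (fun R : ℝ => (y - ⟪e, z⟫_ℝ) + ‖y • e - z‖ ^ 2 / 2 * R⁻¹) atTop
      (𝓝 ((y - ⟪e, z⟫_ℝ) + ‖y • e - z‖ ^ 2 / 2 * 0)) :=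
    (tendsto_inv_atTop_zero.const_mul _).const_add _
  rw [mul_zero, add_zero] at hlim
  refine hlim.congr' ?_
  filter_upwards [eventually_gt_atTop 0] with R hR
  rw [show (R + y) • e - z = R • e + (y • e - z) by rw [add_smul, add_sub_assoc],
    norm_add_sq_real, norm_smul, he, real_inner_smul_left, inner_sub_right,
    real_inner_smul_right, real_inner_self_eq_norm_sq, he, Real.norm_of_nonneg hR.le]
  field_simp
  ring

variable [FiniteDimensional ℝ E]

theorem isRadialTest_packet {A R : ℝ} (hA : 0 < A) (hR : 2 * A < R) :
    IsRadialTest (packet A R : E → ℂ) where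
  contDiff := contDiff_packet A R
  hasCompactSupport := (isCompact_closedBall (0 : E) (R + A)).of_isClosed_subset
    (isClosed_tsupport _) fun _ hx =>
      mem_closedBall_zero_iff.2 (tsupport_packet_subset hA hR hx).2
  zero_notMem hzero := by
    have hle : R - 2 * A ≤ ‖(0 : E)‖ := (tsupport_packet_subset hA hR hzero).1
    rw [norm_zero] at hle
    linarith
  radial x y h := by simp only [packet, h]

variable [MeasurableSpace E] [BorelSpace E]

theorem tendsto_integral_mul_packet {q : E → ℂ} (hq : Integrable q) (A : ℝ) {e : E}
    (he : ‖e‖ = 1) (y : ℝ) :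
    Tendsto (fun R : ℝ => ∫ z, q z * packet A R ((R + y) • e - z)) atTop
      (𝓝 (∫ z, q z * profile A (y - ⟪e, z⟫_ℝ))) := by
  refine tendsto_integral_filter_of_dominated_convergence (fun z => ‖q z‖)
    (.of_forall fun R => ?_) (.of_forall fun R => ae_of_all _ fun z => ?_) hq.norm
    (ae_of_all _ fun z => (tendsto_packet A he y z).const_mul _)
  · exact hq.aestronglyMeasurable.mul
      ((contDiff_packet A R).continuous.comp (by fun_prop)).aestronglyMeasurable
  · rw [norm_mul]
    exact mul_le_of_le_one_right (norm_nonneg _) (norm_profile_le_one _ _)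

end Packet

section RayLowerBound

theorem mul_measure_le_of_lintegral_le_of_tendsto {X : Type*} [MeasurableSpace X] {μ : Measure X}
    {s : Set X} (hs : MeasurableSet s) {f : ℕ → X → ℝ≥0∞} {g : X → ℝ≥0∞} {c B : ℝ≥0∞}
    (hf : ∀ j, Measurable (f j)) (hlim : ∀ x ∈ s, Tendsto (fun j => f j x) atTop (𝓝 (g x)))
    (hg : ∀ x ∈ s, c ≤ g x) (hB : ∀ j, ∫⁻ x in s, f j x ∂μ ≤ B) : c * μ s ≤ B :=
  calc c * μ s = ∫⁻ _ in s, c ∂μ := (setLIntegral_const s c).symm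
    _ ≤ ∫⁻ x in s, liminf (fun j => f j x) atTop ∂μ :=
      setLIntegral_mono' hs fun x hx => (hg x hx).trans_eq (hlim x hx).liminf_eq.symm
    _ ≤ liminf (fun j => ∫⁻ x in s, f j x ∂μ) atTop := lintegral_liminf_le hf
    _ ≤ B := liminf_le_of_le (by isBoundedDefault) fun b hb =>
      let ⟨j, hj⟩ := hb.exists
      hj.trans (hB j)

variable {E : Type*} [NormedAddCommGroup E] [InnerProductSpace ℝ E] [FiniteDimensional ℝ E]
  [MeasurableSpace E] [BorelSpace E]

theorem integrable_annulusCutoff_mul_fourier (f : 𝓢(E, ℂ)) :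
    Integrable fun η => annulusCutoff η * 𝓕 (f : E → ℂ) η := by
  rw [← SchwartzMap.fourier_coe]
  exact (𝓕 f).integrable.bdd_mul contDiff_annulusCutoff.continuous.aestronglyMeasurable
    (ae_of_all _ norm_annulusCutoff_le_one)

theorem exists_le_of_lintegral_propagate_packet_le {a : ℝ} (ha : 0 < a) {e : E} (he : ‖e‖ = 1) :
    ∃ κ > 0, 2 * π / a * κ ≤ 1 ∧ ∃ A₀, ∀ A ≥ A₀, ∀ B : ℝ≥0∞,
      (∀ R > 2 * A, ∫⁻ y in Set.Ioo 0 (κ * A ^ 2),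
        ‖propagate a (fun η => annulusCutoff η * 𝓕 (packet A R : E → ℂ) η) ((R + y) • e)
          (-(2 * π / a * y))‖ₑ ^ 2 ≤ B) →
      ENNReal.ofReal (κ * A ^ 2 / 4) ≤ B := by
  obtain ⟨κ, hκ, hκ_one, A₀, hA₀, hhalf⟩ :=
    exists_half_le_norm_integral_annulusKernel_mul_profile (E := E) ha he
  refine ⟨κ, hκ, hκ_one, A₀, fun A hA B hB => ?_⟩
  set radius : ℕ → ℝ := fun j => 2 * A + 1 + j
  have hradius (j : ℕ) : 2 * A < radius j := by
    simp only [radius]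
    linarith [j.cast_nonneg (α := ℝ)]
  have hradius_atTop : Tendsto radius atTop atTop :=
    tendsto_atTop_add_const_left _ _ tendsto_natCast_atTop_atTop
  choose f hf using fun j =>
    (isRadialTest_packet (E := E) (hA₀.trans_le hA) (hradius j)).exists_schwartzMap
  have hfatou := mul_measure_le_of_lintegral_le_of_tendsto (μ := volume)
    (s := Set.Ioo 0 (κ * A ^ 2)) (c := ENNReal.ofReal (1 / 4)) (g := fun y =>
      ‖∫ z, annulusKernel E a (-(2 * π / a * y)) z * profile A (y - ⟪e, z⟫_ℝ)‖ₑ ^ 2)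
    measurableSet_Ioo
    (fun j => ?_) (fun y _ => ?_) (fun y hy => ?_) fun j => hB (radius j) (hradius j)
  rotate_left
  · rw [hf]
    exact (((continuous_propagate ha.le (integrable_annulusCutoff_mul_fourier (f j))).comp
      (by fun_prop : Continuous fun y : ℝ => ((radius j + y) • e, -(2 * π / a * y)))
      ).measurable.enorm.pow_const 2)
  · refine ((ENNReal.continuous_pow 2).tendsto _).comp ((continuous_enorm.tendsto _).comp ?_)
    refine ((tendsto_integral_mul_packet (annulusKernel E a (-(2 * π / a * y))).integrable A he
      y).comp hradius_atTop).congr fun j => ?_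
    rw [Function.comp_apply, hf, propagate_annulusCutoff_mul_fourier]
  · rw [← ofReal_norm, ← ENNReal.ofReal_pow (norm_nonneg _)]
    exact ENNReal.ofReal_le_ofReal (by nlinarith [hhalf A hA y hy])
  · rwa [Real.volume_Ioo, ← ENNReal.ofReal_mul (by norm_num), sub_zero,
      one_div_mul_eq_div] at hfatou

end RayLowerBound

section SobolevEnergy

theorem one_add_sum_pow_le {ι : Type*} [Fintype ι] {x : ι → ℝ} (hx : ∀ i, 0 ≤ x i) (m : ℕ) :
    (1 + ∑ i, x i) ^ m ≤ (Fintype.card ι + 1) ^ m * (1 + ∑ i, x i ^ m) := by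
  set z : Option ι → ℝ := fun o => o.elim 1 x
  have hz (o) (_ : o ∈ Finset.univ) : 0 ≤ z o := by
    cases o
    exacts [zero_le_one, hx _]
  cases m with
  | zero => simp
  | succ m =>
    have hmean := pow_sum_div_card_le_sum_pow hz m
    rw [Finset.card_univ, Fintype.card_option, div_le_iff₀ (by positivity), Fintype.sum_option,
      Fintype.sum_option] at hmean
    push_cast at hmean
    simp only [z, Option.elim, one_pow] at hmean
    have hsum : 0 ≤ ∑ i, x i ^ (m + 1) := Finset.sum_nonneg fun i _ => pow_nonneg (hx i) _
    calc (1 + ∑ i, x i) ^ (m + 1) ≤ (1 + ∑ i, x i ^ (m + 1)) * (Fintype.card ι + 1) ^ m := hmean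
      _ ≤ (1 + ∑ i, x i ^ (m + 1)) * (Fintype.card ι + 1) ^ (m + 1) := by
        gcongr <;> simp
      _ = _ := mul_comm _ _

variable {E : Type*} [NormedAddCommGroup E] [InnerProductSpace ℝ E] [FiniteDimensional ℝ E]
  [MeasurableSpace E] [BorelSpace E]

theorem norm_fourier_iteratedLineDerivOp (F : 𝓢(E, ℂ)) (v η : E) (m : ℕ) :
    ‖𝓕 (∂^{fun _ : Fin m => v} F) η‖ = (2 * π * |⟪η, v⟫_ℝ|) ^ m * ‖𝓕 F η‖ := by
  induction m with
  | zero => simp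
  | succ m ih =>
    have hinner : (inner ℝ · v : E → ℝ).HasTemperateGrowth :=
      ((innerSL ℝ).flip v).hasTemperateGrowth
    rw [LineDeriv.iteratedLineDerivOp_succ_left, SchwartzMap.fourier_lineDerivOp_eq, smul_apply,
      SchwartzMap.smulLeftCLM_apply_apply hinner, norm_smul, norm_smul]
    simp only [Fin.tail_def]
    rw [ih, norm_mul, norm_mul, Complex.norm_I, Complex.norm_ofNat, Complex.norm_real,
      Real.norm_of_nonneg pi_pos.le, Real.norm_eq_abs]
    ring

theorem lintegral_pow_inner_mul_fourier_sq_le (F : 𝓢(E, ℂ)) {v : E} (hv : ‖v‖ = 1) (m : ℕ) :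
    ∫⁻ η, ENNReal.ofReal (((2 * π * ⟪η, v⟫_ℝ) ^ 2) ^ m) * ‖𝓕 (F : E → ℂ) η‖ₑ ^ 2
      ≤ ∫⁻ x, ‖iteratedFDeriv ℝ m F x‖ₑ ^ 2 := by
  set G : 𝓢(E, ℂ) := ∂^{fun _ : Fin m => v} F
  calc _ = ∫⁻ η, ‖𝓕 (G : E → ℂ) η‖ₑ ^ 2 := by
        refine lintegral_congr fun η => ?_
        rw [← SchwartzMap.fourier_coe, ← SchwartzMap.fourier_coe, ← ofReal_norm, ← ofReal_norm,
          norm_fourier_iteratedLineDerivOp, ← ENNReal.ofReal_pow (by positivity),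
          ← ENNReal.ofReal_pow (by positivity), ← ENNReal.ofReal_mul (by positivity),
          mul_pow _ ‖_‖, pow_right_comm, ← sq_abs ((2 * π * _) ^ m),
          abs_pow, abs_mul, abs_of_pos two_pi_pos]
    _ = ∫⁻ x, ‖G x‖ₑ ^ 2 := lintegral_enorm_fourier_sq G.integrable (G.memLp 2)
    _ ≤ _ := lintegral_mono fun x => by
        gcongr
        rw [enorm_le_iff_norm_le, SchwartzMap.iteratedLineDerivOp_eq_iteratedFDeriv]
        simpa [hv] using (iteratedFDeriv ℝ m F x).le_opNorm fun _ => v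

theorem sobolevNormSq_natCast_le (F : 𝓢(E, ℂ)) (m : ℕ) :
    sobolevNormSq m (F : E → ℂ) ≤ (Module.finrank ℝ E + 1) ^ m * ((∫⁻ x, ‖F x‖ₑ ^ 2)
      + Module.finrank ℝ E * ∫⁻ x, ‖iteratedFDeriv ℝ m F x‖ₑ ^ 2) := by
  set b := stdOrthonormalBasis ℝ E
  have hweight (η : E) : (1 + (2 * π * ‖η‖) ^ 2) ^ (m : ℝ)
      ≤ (Module.finrank ℝ E + 1) ^ m * (1 + ∑ i, ((2 * π * ⟪η, b i⟫_ℝ) ^ 2) ^ m) := by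
    rw [rpow_natCast, mul_pow, ← b.sum_sq_inner_left η, Finset.mul_sum]
    simpa only [mul_pow, Fintype.card_fin] using
      one_add_sum_pow_le (fun i => sq_nonneg (2 * π * ⟪η, b i⟫_ℝ)) m
  have hmeas (c : E → ℝ) (hc : Continuous c) :
      Measurable fun η => ENNReal.ofReal (c η) * ‖𝓕 (F : E → ℂ) η‖ₑ ^ 2 :=
    hc.measurable.ennreal_ofReal.mul
      ((continuous_fourier F.integrable).measurable.enorm.pow_const 2)
  calc sobolevNormSq m (F : E → ℂ)
      ≤ ∫⁻ η, (Module.finrank ℝ E + 1) ^ m * (‖𝓕 (F : E → ℂ) η‖ₑ ^ 2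
          + ∑ i, ENNReal.ofReal (((2 * π * ⟪η, b i⟫_ℝ) ^ 2) ^ m) * ‖𝓕 (F : E → ℂ) η‖ₑ ^ 2) := by
        refine lintegral_mono fun η => ?_
        rw [← Finset.sum_mul, ← one_add_mul, ← mul_assoc]
        gcongr
        refine (ENNReal.ofReal_le_ofReal (hweight η)).trans_eq ?_
        rw [ENNReal.ofReal_mul (by positivity), ENNReal.ofReal_pow (by positivity),
          ENNReal.ofReal_add (by positivity) (by positivity), ENNReal.ofReal_natCast,
          ENNReal.ofReal_one, ENNReal.ofReal_add (by positivity)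
            (Finset.sum_nonneg fun i _ => by positivity), ENNReal.ofReal_one,
          ENNReal.ofReal_sum_of_nonneg fun i _ => by positivity]
    _ = (Module.finrank ℝ E + 1) ^ m * ((∫⁻ η, ‖𝓕 (F : E → ℂ) η‖ₑ ^ 2) + ∑ i, ∫⁻ η,
          ENNReal.ofReal (((2 * π * ⟪η, b i⟫_ℝ) ^ 2) ^ m) * ‖𝓕 (F : E → ℂ) η‖ₑ ^ 2) := by
        rw [lintegral_const_mul' _ _ (by finiteness), lintegral_add_left
          ((continuous_fourier F.integrable).measurable.enorm.pow_const 2),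
          lintegral_finsetSum _ fun i _ => hmeas _ (by fun_prop)]
    _ ≤ _ := by
        rw [lintegral_enorm_fourier_sq F.integrable (F.memLp 2)]
        gcongr
        refine (Finset.sum_le_sum fun i _ =>
          lintegral_pow_inner_mul_fourier_sq_le F (b.norm_eq_one i) m).trans_eq ?_
        rw [Finset.sum_const, Finset.card_univ, Fintype.card_fin, nsmul_eq_mul]

end SobolevEnergy

section PacketEnergy

theorem norm_iteratedDeriv_exp_two_pi_mul_I (j : ℕ) (v : ℝ) :
    ‖iteratedDeriv j (fun v : ℝ => Complex.exp ((2 * π * v : ℝ) * Complex.I)) v‖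
      = (2 * π) ^ j := by
  have hformula : iteratedDeriv j (fun v : ℝ => Complex.exp ((2 * π * v : ℝ) * Complex.I))
      = fun v => (2 * π * Complex.I) ^ j * Complex.exp ((2 * π * v : ℝ) * Complex.I) := by
    induction j with
    | zero => simp
    | succ j ih =>
      rw [iteratedDeriv_succ, ih]
      funext v
      have hphase : HasDerivAt (fun v : ℝ => ((2 * π * v : ℝ) : ℂ) * Complex.I)
          (2 * π * Complex.I) v := by
        simpa using (((hasDerivAt_id v).const_mul (2 * π)).ofReal_comp).mul_const Complex.I
      rw [(hphase.cexp.const_mul _).deriv]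
      ring
  rw [hformula, norm_mul, norm_pow, Complex.norm_exp_ofReal_mul_I, mul_one, norm_mul, norm_mul,
    Complex.norm_I, Complex.norm_ofNat, Complex.norm_real, Real.norm_of_nonneg pi_pos.le, mul_one]

theorem exists_norm_iteratedDeriv_lineBump_div_le (j : ℕ) :
    ∃ c, ∀ A ≥ 1, ∀ v, ‖iteratedDeriv j (fun v : ℝ => (lineBump (v / A) : ℂ)) v‖ ≤ c := by
  set ψ : 𝓢(ℝ, ℂ) := hasCompactSupport_lineBump_ofReal.toSchwartzMap contDiff_lineBump_ofReal
  refine ⟨SchwartzMap.seminorm ℝ 0 j ψ, fun A hA v => ?_⟩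
  have hscale : ‖A⁻¹ ^ j‖ ≤ 1 := by
    rw [Real.norm_of_nonneg (by positivity)]
    exact pow_le_one₀ (by positivity) (inv_le_one_of_one_le₀ hA)
  simp only [div_eq_inv_mul]
  rw [iteratedDeriv_comp_const_smul (contDiff_infty.1 contDiff_lineBump_ofReal j) A⁻¹, norm_smul]
  refine (mul_le_of_le_one_left (norm_nonneg _) hscale).trans ?_
  simpa [← norm_iteratedFDeriv_eq_norm_iteratedDeriv] using! ψ.le_seminorm ℝ 0 j (A⁻¹ * v)

theorem exists_norm_iteratedFDeriv_profile_le (m : ℕ) :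
    ∃ c, ∀ A ≥ 1, ∀ v, ∀ j ≤ m, ‖iteratedFDeriv ℝ j (profile A) v‖ ≤ c := by
  choose c hc using exists_norm_iteratedDeriv_lineBump_div_le
  set d : ℕ → ℝ := fun j => ∑ i ∈ Finset.range (j + 1), (j.choose i : ℝ) * (2 * π) ^ i * c (j - i)
  have hc_nonneg (j) : 0 ≤ c j := (norm_nonneg _).trans (hc j 1 le_rfl 0)
  refine ⟨∑ j ∈ Finset.range (m + 1), d j, fun A hA v j hj => ?_⟩
  have hd : d j ≤ ∑ j ∈ Finset.range (m + 1), d j :=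
    Finset.single_le_sum (f := d) (fun j _ => Finset.sum_nonneg fun i _ =>
      mul_nonneg (by positivity) (hc_nonneg _)) (Finset.mem_range_succ_iff.2 hj)
  refine (norm_iteratedFDeriv_mul_le (N := ∞) contDiff_exp_two_pi_mul_I
    (contDiff_lineBump_ofReal.comp (contDiff_id.div_const A)) v (mod_cast le_top)).trans
    (le_trans (Finset.sum_le_sum fun i _ => ?_) hd)
  simp only [norm_iteratedFDeriv_eq_norm_iteratedDeriv]
  rw [norm_iteratedDeriv_exp_two_pi_mul_I]
  gcongr
  exact hc (j - i) A hA v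

variable {E : Type*} [NormedAddCommGroup E] [InnerProductSpace ℝ E]

theorem norm_iteratedFDeriv_norm_sq_sub_div_le {R : ℝ} (hR : 1 ≤ R) {x : E} (hx : ‖x‖ ≤ 2 * R)
    {i : ℕ} (hi : 1 ≤ i) :
    ‖iteratedFDeriv ℝ i (fun x : E => (‖x‖ ^ 2 - R ^ 2) / (2 * R)) x‖ ≤ 2 ^ i := by
  have hR_pos : 0 < R := by positivity
  have hderiv : fderiv ℝ (fun x : E => (‖x‖ ^ 2 - R ^ 2) / (2 * R))
      = (R⁻¹ • innerSL ℝ : E →L[ℝ] E →L[ℝ] ℝ) := by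
    funext x
    have hsq := (((hasStrictFDerivAt_norm_sq x).hasFDerivAt.sub_const (R ^ 2)).mul_const
      (2 * R)⁻¹).fderiv
    simp only [← div_eq_mul_inv] at hsq
    rw [hsq, smul_apply, ← Nat.cast_smul_eq_nsmul ℝ, smul_smul]
    congr 1
    field_simp
    norm_num
  obtain ⟨i, rfl⟩ := Nat.exists_eq_add_of_le' hi
  rw [← norm_iteratedFDeriv_fderiv, hderiv]
  match i with
  | 0 =>
    rw [norm_iteratedFDeriv_zero, smul_apply, norm_smul, innerSL_apply_norm,
      norm_inv, Real.norm_of_nonneg hR_pos.le, inv_mul_le_iff₀ hR_pos]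
    simpa [mul_comm] using hx
  | 1 =>
    rw [norm_iteratedFDeriv_one, ContinuousLinearMap.fderiv, norm_smul, norm_inv,
      Real.norm_of_nonneg hR_pos.le]
    calc R⁻¹ * ‖(innerSL ℝ : E →L[ℝ] E →L[ℝ] ℝ)‖ ≤ 1 * 1 := by
          gcongr
          exacts [inv_le_one_of_one_le₀ hR, norm_innerSL_le ℝ]
      _ ≤ 2 ^ (1 + 1) := by norm_num
  | i + 2 =>
    have hconst : fderiv ℝ (R⁻¹ • innerSL ℝ : E →L[ℝ] E →L[ℝ] ℝ) = fun _ => R⁻¹ • innerSL ℝ :=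
      funext fun _ => ContinuousLinearMap.fderiv _
    rw [← norm_iteratedFDeriv_fderiv, hconst,
      iteratedFDeriv_const_of_ne i.succ_ne_zero, Pi.zero_apply, norm_zero]
    positivity

theorem exists_norm_iteratedFDeriv_packet_le (m : ℕ) :
    ∃ c, ∀ A ≥ 1, ∀ R > 2 * A, ∀ x : E, ‖iteratedFDeriv ℝ m (packet A R) x‖ ≤ c := by
  obtain ⟨c, hc⟩ := exists_norm_iteratedFDeriv_profile_le m
  have hc_nonneg : 0 ≤ c := (norm_nonneg _).trans (hc 1 le_rfl 0 0 m.zero_le)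
  refine ⟨m.factorial * c * 2 ^ m, fun A hA R hR x => ?_⟩
  by_cases hx : x ∈ tsupport (packet A R)
  · refine norm_iteratedFDeriv_comp_le (N := ∞) (contDiff_profile A)
      (((contDiff_norm_sq ℝ).sub contDiff_const).div_const _) (mod_cast le_top) x
      (fun j hj => hc A hA _ j hj)
      fun i hi _ => norm_iteratedFDeriv_norm_sq_sub_div_le (by linarith) ?_ hi
    linarith [(tsupport_packet_subset (by linarith) hR hx).2]
  · rw [Function.notMem_support.1 fun h => hx (support_iteratedFDeriv_subset m h), norm_zero]
    positivity

variable [FiniteDimensional ℝ E] [MeasurableSpace E] [BorelSpace E] [Nontrivial E]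

variable (E) in
theorem exists_lintegral_iteratedFDeriv_packet_sq_le (m : ℕ) :
    ∃ K : ℝ≥0∞, K ≠ ⊤ ∧ ∀ A ≥ 1, ∀ R > 2 * A,
      ∫⁻ x, ‖iteratedFDeriv ℝ m (packet A R : E → ℂ) x‖ₑ ^ 2
        ≤ K * (ENNReal.ofReal A * ((volume : Measure E).toSphere Set.univ
          * ENNReal.ofReal (R ^ (Module.finrank ℝ E - 1)))) := by
  obtain ⟨c, hc⟩ := exists_norm_iteratedFDeriv_packet_le (E := E) m
  set d := Module.finrank ℝ E - 1
  refine ⟨ENNReal.ofReal c ^ 2 * ENNReal.ofReal (2 ^ d * 3), by finiteness, fun A hA R hR => ?_⟩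
  have hR_pos : 0 < R := by linarith
  set shell : Set E := {x | ‖x‖ ∈ Set.Icc (R - 2 * A) (R + A)}
  have hshell : MeasurableSet shell := measurableSet_Icc.preimage measurable_norm
  have hpoint (x : E) : ‖iteratedFDeriv ℝ m (packet A R) x‖ₑ ^ 2
      ≤ shell.indicator (fun _ => ENNReal.ofReal c ^ 2) x := by
    by_cases hx : x ∈ shell
    · rw [Set.indicator_of_mem hx, ← ofReal_norm]
      gcongr
      exact hc A hA R hR x
    · have hzero : iteratedFDeriv ℝ m (packet A R) x = 0 := of_not_not fun h =>
        hx (tsupport_packet_subset (by linarith) hR (support_iteratedFDeriv_subset m h))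
      rw [Set.indicator_of_notMem hx, ← ofReal_norm, hzero, norm_zero, ENNReal.ofReal_zero,
        zero_pow two_ne_zero]
  have hradius : (R + A) ^ d * (R + A - (R - 2 * A)) ≤ 2 ^ d * 3 * (A * R ^ d) := by
    calc (R + A) ^ d * (R + A - (R - 2 * A)) ≤ (2 * R) ^ d * (3 * A) := by
          gcongr <;> linarith
      _ = 2 ^ d * 3 * (A * R ^ d) := by ring
  calc ∫⁻ x, ‖iteratedFDeriv ℝ m (packet A R : E → ℂ) x‖ₑ ^ 2
      ≤ ENNReal.ofReal c ^ 2 * volume shell :=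
        (lintegral_mono hpoint).trans_eq (lintegral_indicator_const hshell _)
    _ ≤ ENNReal.ofReal c ^ 2 * ((volume : Measure E).toSphere Set.univ
          * ENNReal.ofReal (2 ^ d * 3 * (A * R ^ d))) := by
        gcongr
        refine (measure_norm_mem_Icc_le volume _ (by linarith)).trans ?_
        rw [← ENNReal.ofReal_mul (by positivity)]
        gcongr
    _ = _ := by
        rw [ENNReal.ofReal_mul (p := 2 ^ d * 3) (by positivity),
          ENNReal.ofReal_mul (p := A) (by linarith)]
        ring

variable (E) in
theorem exists_sobolevNormSq_packet_le (m : ℕ) :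
    ∃ K : ℝ≥0∞, K ≠ ⊤ ∧ ∀ A ≥ 1, ∀ R > 2 * A, sobolevNormSq m (packet A R : E → ℂ)
      ≤ K * (ENNReal.ofReal A * ((volume : Measure E).toSphere Set.univ
        * ENNReal.ofReal (R ^ (Module.finrank ℝ E - 1)))) := by
  obtain ⟨K₀, hK₀, hbound₀⟩ := exists_lintegral_iteratedFDeriv_packet_sq_le E 0
  obtain ⟨K, hK, hbound⟩ := exists_lintegral_iteratedFDeriv_packet_sq_le E m
  refine ⟨(Module.finrank ℝ E + 1) ^ m * (K₀ + Module.finrank ℝ E * K), by finiteness,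
    fun A hA R hR => ?_⟩
  obtain ⟨f, hf⟩ := (isRadialTest_packet (E := E) (by linarith) hR).exists_schwartzMap
  have hmass := hbound₀ A hA R hR
  have hderiv := hbound A hA R hR
  simp_rw [← ofReal_norm, norm_iteratedFDeriv_zero, ofReal_norm] at hmass
  rw [hf] at hmass hderiv ⊢
  refine (sobolevNormSq_natCast_le f m).trans ?_
  rw [mul_assoc, add_mul, mul_assoc _ K]
  gcongr

end PacketEnergy

section Sharpness

theorem ofReal_le_of_ofReal_mul_sq_le {c A : ℝ} (hc : 0 < c) (hA : 0 < A) {B : ℝ≥0∞}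
    (h : ENNReal.ofReal (c * A ^ 2) ≤ B * ENNReal.ofReal A) :
    ENNReal.ofReal A ≤ ENNReal.ofReal c⁻¹ * B := by
  refine (ENNReal.mul_le_mul_iff_left (ENNReal.ofReal_pos.2 hA).ne' ENNReal.ofReal_ne_top).1 ?_
  calc ENNReal.ofReal A * ENNReal.ofReal A
      = ENNReal.ofReal c⁻¹ * ENNReal.ofReal (c * A ^ 2) := by
        rw [← ENNReal.ofReal_mul hA.le, ← ENNReal.ofReal_mul (by positivity),
          inv_mul_cancel_left₀ hc.ne', sq]
    _ ≤ ENNReal.ofReal c⁻¹ * (B * ENNReal.ofReal A) := by gcongr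
    _ = _ := (mul_assoc _ _ _).symm

theorem le_of_eventually_mul_rpow_le {α β δ M : ℝ} (hδ : 0 < δ)
    (h : ∀ᶠ l : ℝ in atTop, δ * l ^ α ≤ M * l ^ β) : α ≤ β := by
  by_contra! hlt
  obtain ⟨l, hle, hl, hgt⟩ := (h.and ((eventually_gt_atTop 0).and
    ((tendsto_rpow_atTop (sub_pos.2 hlt)).eventually_gt_atTop (M / δ)))).exists
  rw [rpow_sub hl, div_lt_div_iff₀ hδ (rpow_pos_of_pos hl β)] at hgt
  linarith

variable {E : Type*} [NormedAddCommGroup E] [InnerProductSpace ℝ E] [FiniteDimensional ℝ E]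
  [MeasurableSpace E] [BorelSpace E] [Nontrivial E]

theorem lintegral_propagate_annulusCutoff_ray_le {a : ℝ} (ha : 0 ≤ a) {f : E → ℂ}
    (hf : IsRadialTest f) {b D R T : ℝ} (hb : 0 < b) (hD : b * D ≤ T) (hR : 0 ≤ R) {e : E}
    (he : ‖e‖ = 1) :
    (volume : Measure E).toSphere Set.univ * (ENNReal.ofReal (R ^ (Module.finrank ℝ E - 1)) *
      ∫⁻ y in Set.Ioo 0 D,
        ‖propagate a (fun η => annulusCutoff η * 𝓕 f η) ((R + y) • e) (-(b * y))‖ₑ ^ 2)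
      ≤ (∫⁻ z, ‖annulusKernel E 0 0 z‖ₑ) ^ 2 * ∫⁻ x, propagateMax a T (𝓕 f) x ^ 2 := by
  obtain ⟨φ, rfl⟩ := hf.exists_schwartzMap
  have hfourier : IsRadial (𝓕 (φ : E → ℂ)) := hf.radial.fourier
  have hradial : IsRadial fun η => annulusCutoff η * 𝓕 (φ : E → ℂ) η := fun x y hxy =>
    congrArg₂ (· * ·) (isRadial_annulusCutoff x y hxy) (hfourier x y hxy)
  have htime (y) (hy : y ∈ Set.Ioo 0 D) : -(b * y) ∈ Set.Ioo (-T) T := by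
    have hpos : 0 < b * y := mul_pos hb hy.1
    have hlt : b * y < b * D := by gcongr; exact hy.2
    constructor <;> linarith
  refine (lintegral_propagate_ray_le ha hradial (integrable_annulusCutoff_mul_fourier φ) hR
    (by fun_prop) htime he).trans ?_
  rw [annulusCutoff_eq_fourier]
  exact lintegral_propagateMax_fourier_mul_sq_le ha (annulusKernel E 0 0).integrable
    (annulusKernel E 0 0).continuous.measurable (by
      rw [← SchwartzMap.fourier_coe]; exact (𝓕 φ).integrable) T

variable (E) in
theorem exists_ofReal_le_mul_of_radialMaximalEstimate {a : ℝ} (ha : 0 < a) (s : ℝ) :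
    ∃ K : ℝ≥0∞, K ≠ ⊤ ∧ ∃ A₀ : ℝ, ∀ A ≥ A₀, ∀ C : ℝ≥0∞,
      RadialMaximalEstimate E a s (A ^ 2) C → ENNReal.ofReal A ≤ K * C := by
  obtain ⟨e, he⟩ := exists_norm_eq E zero_le_one
  obtain ⟨m, hm⟩ := exists_nat_ge s
  obtain ⟨κ, hκ, hκ_one, A₀, hlow⟩ := exists_le_of_lintegral_propagate_packet_le ha he
  obtain ⟨K, hK, hup⟩ := exists_sobolevNormSq_packet_le E m
  set Q := ∫⁻ z, ‖annulusKernel E 0 0 z‖ₑ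
  have hQ : Q ≠ ⊤ := (annulusKernel E 0 0).integrable.2.ne
  set S := (volume : Measure E).toSphere Set.univ
  have hS : S ≠ 0 := Measure.measure_univ_ne_zero.2 (Measure.toSphere_ne_zero _)
  refine ⟨ENNReal.ofReal (κ / 4)⁻¹ * (Q ^ 2 * K), by finiteness, max A₀ 1, fun A hA C h => ?_⟩
  have hA_one : 1 ≤ A := (le_max_right _ _).trans hA
  have hA_pos : 0 < A := by positivity
  have hray : ENNReal.ofReal (κ / 4 * A ^ 2) ≤ Q ^ 2 * K * C * ENNReal.ofReal A := by
    rw [div_mul_eq_mul_div]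
    refine hlow A ((le_max_left _ _).trans hA) _ fun R hR => ?_
    have hR_pos : 0 < R := by linarith
    set V := ENNReal.ofReal (R ^ (Module.finrank ℝ E - 1))
    have hV : V ≠ 0 := (ENNReal.ofReal_pos.2 (by positivity)).ne'
    have hf := isRadialTest_packet (E := E) hA_pos hR
    refine (ENNReal.mul_le_mul_iff_right (mul_ne_zero hS hV)
      (ENNReal.mul_ne_top (measure_ne_top _ _) ENNReal.ofReal_ne_top)).1 ?_
    rw [mul_assoc]
    calc _ ≤ Q ^ 2 * ∫⁻ x, propagateMax a (A ^ 2) (𝓕 (packet A R : E → ℂ)) x ^ 2 :=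
          lintegral_propagate_annulusCutoff_ray_le ha.le hf (by positivity)
            (by rw [← mul_assoc]; exact mul_le_of_le_one_left (sq_nonneg A) hκ_one) hR_pos.le he
      _ ≤ Q ^ 2 * (C * (K * (ENNReal.ofReal A * (S * V)))) := by
          gcongr
          exact (h _ hf).trans
            (mul_le_mul_right ((sobolevNormSq_mono hm _).trans (hup A hA_one R hR)) C)
      _ = S * V * (Q ^ 2 * K * C * ENNReal.ofReal A) := by ring
  calc ENNReal.ofReal A ≤ ENNReal.ofReal (κ / 4)⁻¹ * (Q ^ 2 * K * C) :=
        ofReal_le_of_ofReal_mul_sq_le (by positivity) hA_pos hray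
    _ = _ := by ring

theorem RadialMaximalEstimate.div_four_le {a s T : ℝ} {C : ℝ≥0∞} (ha : 0 < a) (hT : 0 < T)
    (hC : C ≠ ⊤) (h : RadialMaximalEstimate E a s T C) : a / 4 ≤ s := by
  suffices hmax : a / 4 ≤ max s 0 from (le_max_iff.1 hmax).resolve_right (by linarith)
  set σ := max s 0
  obtain ⟨K, hK, A₀, hbound⟩ := exists_ofReal_le_mul_of_radialMaximalEstimate E ha σ
  have hgrowth : ∀ᶠ l : ℝ in atTop, √T * l ^ (a / 2) ≤ (K * C).toReal * l ^ (2 * σ) := by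
    have hlarge : ∀ᶠ l : ℝ in atTop, A₀ ≤ √T * l ^ (a / 2) :=
      ((tendsto_rpow_atTop (by positivity)).const_mul_atTop
        (Real.sqrt_pos.2 hT)).eventually_ge_atTop A₀
    filter_upwards [hlarge, eventually_ge_atTop 1] with l hl hl_one
    have hl_nonneg : 0 ≤ l := zero_le_one.trans hl_one
    have hsq : l ^ a * T = (√T * l ^ (a / 2)) ^ 2 := by
      rw [mul_pow, Real.sq_sqrt hT.le, ← rpow_mul_natCast hl_nonneg, mul_comm]
      push_cast
      ring_nf
    have hdilate := (h.mono (le_max_left s 0)).dilate (le_max_right s 0) hl_one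
    rw [hsq] at hdilate
    have hle := hbound _ hl _ hdilate
    rw [← mul_assoc, ← ENNReal.ofReal_toReal (ENNReal.mul_ne_top hK hC),
      ← ENNReal.ofReal_mul ENNReal.toReal_nonneg] at hle
    exact (ENNReal.ofReal_le_ofReal_iff (by positivity)).1 hle
  linarith [le_of_eventually_mul_rpow_le (Real.sqrt_pos.2 hT) hgrowth]

end Sharpness

theorem stmt1_general (a : ℝ) (ha : 0 < a) (n : ℕ) (hn : n ≠ 0) (s : ℝ)
    (h : ∃ C > 0, ∀ f : EuclideanSpace ℝ (Fin n) → ℂ,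
      ContDiff ℝ (⊤ : ℕ∞) f → HasCompactSupport f → 0 ∉ tsupport f →
      (∀ x y : EuclideanSpace ℝ (Fin n), ‖x‖ = ‖y‖ → f x = f y) →
      (∫ x, (⨆ t : Set.Ioo (-1 : ℝ) 1, ‖Sosc n a f x t‖) ^ 2) ^ (1/2 : ℝ)
        ≤ C * (∫ ξ, (1 + ‖ξ‖ ^ 2) ^ s * ‖FT n f ξ‖ ^ 2) ^ (1/2 : ℝ)) :
    a / 4 ≤ s := by
  obtain ⟨C, hC, hbound⟩ := h
  have : NeZero n := ⟨hn⟩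
  have hest := radialMaximalEstimate_of_Sosc ha.le hC.le fun f hf =>
    hbound f hf.contDiff hf.hasCompactSupport hf.zero_notMem hf.radial
  exact hest.div_four_le ha (by positivity) ENNReal.ofReal_ne_top

theorem stmt1 (a : ℝ) (ha : 0 < a) (ha1 : a ≠ 1) (n : ℕ) (hn : 2 ≤ n) (s : ℝ)
    (h : ∃ C > 0, ∀ f : EuclideanSpace ℝ (Fin n) → ℂ,
      ContDiff ℝ (⊤ : ℕ∞) f → HasCompactSupport f → 0 ∉ tsupport f →
      (∀ x y : EuclideanSpace ℝ (Fin n), ‖x‖ = ‖y‖ → f x = f y) →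
      (∫ x, (⨆ t : Set.Ioo (-1 : ℝ) 1, ‖Sosc n a f x t‖) ^ 2) ^ (1/2 : ℝ)
        ≤ C * (∫ ξ, (1 + ‖ξ‖ ^ 2) ^ s * ‖FT n f ξ‖ ^ 2) ^ (1/2 : ℝ)) :
    a / 4 ≤ s :=
  stmt1_general a ha n (by lia) s h
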